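/- arXiv:2007.00910 — 2 statements merged into one kernel-verified Lean document; each statement's English description precedes it below -/
import Mathlib

section
/- Let m ≥ 1 be an integer and let n = (n_1,…,n_m) and n' = (n'_1,…,n'_m) be two distinct m-tuples of natural numbers. Let (φ_k) and (ψ_k) be normalized eigenfunction sequences on 𝐇^m with eigenvalues λ_k → +∞ and μ_k → +∞ respectively. Assume there is ε > 0 such that for every k the z-Fourier coefficients of φ_k vanish at every α ∈ ℤ^m unless α_j ≥ ελ_k for all j, and those of ψ_k vanish unless α_j ≥ εμ_k for all j. Assume moreover that for every j ∈ {1,…,m} and every k, −Δ_jφ_k = (2n_j+1)·(−i ∂_{z_j}φ_k) and −Δ_jψ_k = (2n'_j+1)·(−i ∂_{z_j}ψ_k) (i.e., φ_k and ψ_k are eigenfunctions of the harmonic oscillators Ω_j with eigenvalues 2n_j+1 and 2n'_j+1). Then for every continuous Γ^m-periodic a: ℝ^{3m} → ℂ, ∫_D a·φ_k·conj(ψ_k) → 0 as k → ∞. (Projection to the base manifold of the orthogonality claim in the paper's Lemma 3.2(2) and in the proof of Lemma 4.5: sequences living in distinct harmonic-oscillator blocks have vanishing joint microlocal defect measure.)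 -/
/-!
Choose `j` with `n j ≠ n' j` and put `N = 2 n_j + 1`, `N' = 2 n'_j + 1`, `D_j = -i ∂_{z_j}`. On
`φ_k` the `z_j`-frequencies are at least `ε λ_k`, so `φ_k = D_j Φ_k` for a smooth periodic `Φ_k`
with `‖Φ_k‖ ≤ κ_k := 1 / (ε λ_k)` (`primitive_bounds`). Here `Φ_k` is the average of `φ_k` along the
`z_j`-circle against a sawtooth kernel. This average commutes with `X_j`, `Y_j`, `∂_{z_j}`, so `Φ_k`
satisfies the same oscillator equation `-Δ_j Φ_k = N D_j Φ_k` (`oscillator_zAvg`), and pairing that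
equation with `Φ_k` gives `‖X_j Φ_k‖² + ‖Y_j Φ_k‖² ≤ N κ_k` (`energy`).

For a smooth periodic weight `b`, Green's identity (`green`) moves `Δ_j` from `Φ_k` to `ψ̄_k` in
`∫ b (Δ_j Φ_k) ψ̄_k`. The two oscillator equations turn the result into `(N - N') ∫ b φ_k ψ̄_k` plus
remainders in which at least one derivative falls on `b` and the other factors are `ψ̄_k` and one of
`Φ_k`, `X_j Φ_k`, `Y_j Φ_k`. Hence `|(N - N') ∫ b φ_k ψ̄_k| ≤ C_b (κ_k + √(N κ_k)) → 0` (`core_bound`).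

A continuous periodic `a` is uniformly approximated by smooth periodic `b` (`density`), and the
Cauchy–Schwarz inequality controls the error since `φ_k`, `ψ_k` are normalized.
-/

open MeasureTheory Filter Real Topology

noncomputable section

abbrev Pt (m : ℕ) : Type := (Fin m → ℝ) × (Fin m → ℝ) × (Fin m → ℝ)

def eX (m : ℕ) (j : Fin m) : Pt m := (Pi.single j 1, 0, 0)
def eY (m : ℕ) (j : Fin m) : Pt m := (0, Pi.single j 1, 0)
def eZ (m : ℕ) (j : Fin m) : Pt m := (0, 0, Pi.single j 1)

/-- The vector field X_j = ∂_{x_j}. -/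
def Xop {m : ℕ} (j : Fin m) (φ : Pt m → ℂ) : Pt m → ℂ := fun q => fderiv ℝ φ q (eX m j)

/-- The vector field ∂_{z_j}. -/
def Zop {m : ℕ} (j : Fin m) (φ : Pt m → ℂ) : Pt m → ℂ := fun q => fderiv ℝ φ q (eZ m j)

/-- The vector field Y_j = ∂_{y_j} - x_j ∂_{z_j}. -/
def Yop {m : ℕ} (j : Fin m) (φ : Pt m → ℂ) : Pt m → ℂ :=
  fun q => fderiv ℝ φ q (eY m j) - (q.1 j : ℂ) * fderiv ℝ φ q (eZ m j)

/-- Δ_j = X_j² + Y_j². -/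
def DeltaJ {m : ℕ} (j : Fin m) (φ : Pt m → ℂ) : Pt m → ℂ :=
  fun q => Xop j (Xop j φ) q + Yop j (Yop j φ) q

/-- Δ = Δ_1 + ⋯ + Δ_m. -/
def Delta {m : ℕ} (φ : Pt m → ℂ) : Pt m → ℂ := fun q => ∑ j, DeltaJ j φ q

/-- Left translation by ((a_j, b_j, c_j))_j on each Heisenberg factor. -/
def heisAct {m : ℕ} (a b c : Fin m → ℝ) (q : Pt m) : Pt m :=
  (fun j => a j + q.1 j, fun j => b j + q.2.1 j, fun j => c j + q.2.2 j - a j * q.2.1 j)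

def InGamma {m : ℕ} (a b c : Fin m → ℝ) : Prop :=
  (∀ j, ∃ k : ℤ, a j = k * Real.sqrt (2 * π)) ∧
  (∀ j, ∃ k : ℤ, b j = k * Real.sqrt (2 * π)) ∧
  (∀ j, ∃ k : ℤ, c j = k * (2 * π))

def GPeriodic {m : ℕ} {α : Type} (φ : Pt m → α) : Prop :=
  ∀ a b c : Fin m → ℝ, InGamma a b c → ∀ q, φ (heisAct a b c q) = φ q

def Dset (m : ℕ) : Set (Pt m) :=
  {q | ∀ j, q.1 j ∈ Set.Ico 0 (Real.sqrt (2 * π)) ∧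
        q.2.1 j ∈ Set.Ico 0 (Real.sqrt (2 * π)) ∧
        q.2.2 j ∈ Set.Ico 0 (2 * π)}

structure EigenSeq (m : ℕ) (φ : ℕ → Pt m → ℂ) (lam : ℕ → ℝ) : Prop where
  smooth : ∀ k, ContDiff ℝ (⊤ : ℕ∞) (φ k)
  periodic : ∀ k, GPeriodic (φ k)
  normalized : ∀ k, ∫ q in Dset m, ‖φ k q‖ ^ 2 = 1
  eigen : ∀ k q, -Delta (φ k) q = (lam k : ℂ) * φ k q

/-- The translation flow T_t^v : adds t v_j to each z_j coordinate. -/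
def Ttrans {m : ℕ} (v : Fin m → ℝ) (t : ℝ) (q : Pt m) : Pt m :=
  (q.1, q.2.1, fun j => q.2.2 j + t * v j)

def TInvariant {m : ℕ} (v : Fin m → ℝ) (η : Measure (Pt m)) : Prop :=
  ∀ t : ℝ, ∀ a : Pt m → ℝ, Continuous a → GPeriodic a →
    ∫ q, a (Ttrans v t q) ∂η = ∫ q, a q ∂η

def sphereL1 (m : ℕ) : Set (Fin m → ℝ) := {v | ∑ j, |v j| = 1}

/-- The box [0,2π)^m for the z-variables. -/
def zBox (m : ℕ) : Set (Fin m → ℝ) := Set.univ.pi fun _ => Set.Ico (0:ℝ) (2 * π)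

/-- The z-Fourier coefficient φ̂_α(x,y) of a Γ^m-periodic function φ. -/
def zFourier {m : ℕ} (φ : Pt m → ℂ) (α : Fin m → ℤ) (x y : Fin m → ℝ) : ℂ :=
  (1 / (2 * π : ℂ) ^ m) *
    ∫ z in zBox m, φ (x, y, z) * Complex.exp (-Complex.I * ∑ j, (α j : ℂ) * (z j : ℂ))

/-! ### Periodic integrals and Parseval's identity in the central variables -/

/-- Integrals of periodic functions over a period box do not change under translation. -/
lemma integral_box_add {m : ℕ} {L : ℝ} (hL : 0 < L) {f : (Fin m → ℝ) → ℂ}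
    (hf : ∀ (x : Fin m → ℝ) (k : Fin m → ℤ), f (fun i => k i * L + x i) = f x) (s : Fin m → ℝ) :
    ∫ x in Set.univ.pi (fun _ : Fin m => Set.Ico (0 : ℝ) L), f (s + x) =
      ∫ x in Set.univ.pi (fun _ : Fin m => Set.Ico (0 : ℝ) L), f x := by
  set b := (Pi.basisFun ℝ (Fin m)).unitsSMul (fun _ => Units.mk0 L hL.ne')
  have hbox : ZSpan.fundamentalDomain b = Set.univ.pi (fun _ : Fin m => Set.Ico (0 : ℝ) L) := by
    ext x
    simp only [ZSpan.fundamentalDomain, Set.mem_ofPred_eq, Set.mem_pi, Set.mem_univ, true_imp_iff]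
    refine forall_congr' fun i => ?_
    have : b.repr x i = x i / L := by
      simp [b, Module.Basis.repr_unitsSMul, Units.smul_def, div_eq_inv_mul]
    rw [this, Set.mem_Ico, Set.mem_Ico, div_lt_one hL, le_div_iff₀ hL, zero_mul]
  have h1 := ZSpan.isAddFundamentalDomain b (volume : Measure (Fin m → ℝ))
  have h2 := h1.vadd_of_comm s
  have hinv : ∀ (g : Submodule.span ℤ (Set.range b)) (x : Fin m → ℝ), f (g +ᵥ x) = f x := by
    rintro ⟨g, hg⟩ x
    rw [b.mem_span_iff_repr_mem ℤ] at hg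
    choose k hk using hg
    rw [← hf x k]
    congr 1
    ext i
    have hk' := hk i
    simp only [b, Module.Basis.repr_unitsSMul, Units.smul_def, Pi.basisFun_repr] at hk'
    simp at hk'
    have : g i = k i * L := by rw [hk']; field_simp
    simp [Submodule.vadd_def, this]
  rw [← hbox]
  have : VAddInvariantMeasure (Submodule.span ℤ (Set.range b)) (Fin m → ℝ) volume :=
    inferInstanceAs <| VAddInvariantMeasure (Submodule.span ℤ (Set.range b)).toAddSubgroup _ _
  have h3 := h2.setIntegral_eq h1 hinv
  rw [← h3]
  have := (measurePreserving_add_left (volume : Measure (Fin m → ℝ)) s).setIntegral_image_emb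
    (measurableEmbedding_addLeft s) f (ZSpan.fundamentalDomain b)
  rw [← this]
  rfl

section UnitTorus

-- Parseval's identity on `UnitAddTorus` is stated for whatever `MeasureSpace` structure the unit
-- circle carries; it is given the normalized Haar measure.
local instance : MeasureSpace UnitAddCircle := ⟨AddCircle.haarAddCircle⟩

local instance : Measure.IsAddHaarMeasure (volume : Measure UnitAddCircle) :=
  inferInstanceAs (Measure.IsAddHaarMeasure AddCircle.haarAddCircle)

local instance : IsProbabilityMeasure (volume : Measure UnitAddCircle) :=
  inferInstanceAs (IsProbabilityMeasure AddCircle.haarAddCircle)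

/-- Parseval's identity on the unit box. No periodicity of `f` is needed: its restriction to the
half-open box is transported to the torus as a bounded measurable function. -/
lemma parseval_unit {m : ℕ} (f : (Fin m → ℝ) → ℂ) (hf : Continuous f) :
    HasSum (fun α : Fin m → ℤ =>
      ‖∫ z in {x : Fin m → ℝ | ∀ i, x i ∈ Set.Ioc (0 : ℝ) 1},
        f z * Complex.exp (-Complex.I * ∑ j, (α j : ℂ) * ((2 * π * z j : ℝ) : ℂ))‖ ^ 2)
      (∫ z in {x : Fin m → ℝ | ∀ i, x i ∈ Set.Ioc (0 : ℝ) 1}, ‖f z‖ ^ 2) := by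
  set F : UnitAddTorus (Fin m) → ℂ := fun τ => f (fun i => (AddCircle.equivIoc 1 0 (τ i)).1) with hF
  have hmeas : Measurable fun (τ : UnitAddTorus (Fin m)) (i : Fin m) => (AddCircle.equivIoc 1 0 (τ i)).1 := by
    refine measurable_pi_lambda _ fun i => ?_
    exact measurable_subtype_coe.comp ((AddCircle.measurableEquivIoc 1 0).measurable.comp (measurable_pi_apply i))
  have hFm : AEStronglyMeasurable F volume :=
    (hf.measurable.comp hmeas).aestronglyMeasurable
  obtain ⟨C, hC⟩ := (isCompact_Icc (a := (0 : Fin m → ℝ)) (b := 1)).exists_bound_of_continuousOn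
    hf.continuousOn
  have hFL : MemLp F 2 volume := by
    refine MemLp.of_bound hFm C (Eventually.of_forall fun τ => hC _ ?_)
    constructor
    · intro i; exact (AddCircle.equivIoc 1 0 (τ i)).2.1.le
    · intro i; simpa using (AddCircle.equivIoc 1 0 (τ i)).2.2
  have key := UnitAddTorus.hasSum_sq_mFourierCoeff hFL.toLp
  have hval : ∀ z ∈ {x : Fin m → ℝ | ∀ i, x i ∈ Set.Ioc (0 : ℝ) 1},
      F (fun i => (z i : UnitAddCircle)) = f z := by
    intro z hz
    simp only [hF]
    congr 1
    ext i
    rw [AddCircle.equivIoc_coe_eq (by simpa using hz i)]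
  have hms : MeasurableSet {x : Fin m → ℝ | ∀ i, x i ∈ Set.Ioc (0 : ℝ) 1} :=
    MeasurableSet.univ_pi' (fun i => measurableSet_Ioc)
  convert! key using 1
  · ext α
    have : UnitAddTorus.mFourierCoeff hFL.toLp α = UnitAddTorus.mFourierCoeff F α := by
      refine integral_congr_ae ?_
      filter_upwards [hFL.coeFn_toLp] with t ht
      rw [ht]
    rw [this, UnitAddTorus.mFourierCoeff_eq_integral F α 0]
    congr 2
    simp only [Pi.zero_apply, zero_add]
    refine setIntegral_congr_fun hms fun z hz => ?_
    simp only [hval z hz, smul_eq_mul]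
    rw [mul_comm]
    congr 1
    simp only [UnitAddTorus.mFourier, ContinuousMap.coe_mk, fourier_coe_apply, ← Complex.exp_sum]
    congr 1
    rw [Finset.mul_sum]
    refine Finset.sum_congr rfl fun j _ => ?_
    push_cast [Pi.neg_apply]
    ring
  · have : ∫ t, ‖(hFL.toLp F : _ → ℂ) t‖ ^ 2 = ∫ t, ‖F t‖ ^ 2 := by
      refine integral_congr_ae ?_
      filter_upwards [hFL.coeFn_toLp] with t ht
      rw [ht]
    rw [this, UnitAddTorus.integral_preimage _ 0]
    simp only [Pi.zero_apply, zero_add]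
    refine setIntegral_congr_fun hms fun z hz => ?_
    simp only [hval z hz]

end UnitTorus

open scoped Pointwise in
lemma integral_zBox_eq {m : ℕ} {E : Type*} [NormedAddCommGroup E] [NormedSpace ℝ E]
    (g : (Fin m → ℝ) → E) :
    ∫ z in {x : Fin m → ℝ | ∀ i, x i ∈ Set.Ioc (0 : ℝ) 1}, g ((2 * π) • z) =
      ((2 * π) ^ m)⁻¹ • ∫ z in zBox m, g z := by
  rw [Measure.setIntegral_comp_smul_of_pos volume g _ two_pi_pos]
  have h : (2 * π) • {x : Fin m → ℝ | ∀ i, x i ∈ Set.Ioc (0 : ℝ) 1} =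
      Set.univ.pi fun _ => Set.Ioc (0:ℝ) (2 * π) := by
    ext x
    rw [Set.mem_smul_set_iff_inv_smul_mem₀ two_pi_pos.ne']
    simp only [Set.mem_ofPred_eq, Set.mem_pi, Set.mem_univ, true_imp_iff]
    refine forall_congr' fun i => ?_
    rw [Pi.smul_apply, smul_eq_mul, ← div_eq_inv_mul, Set.mem_Ioc, Set.mem_Ioc,
      div_le_one two_pi_pos, lt_div_iff₀ two_pi_pos, zero_mul]
  rw [h, Module.finrank_fin_fun]
  congr 1
  refine setIntegral_congr_set ?_
  exact (Measure.univ_pi_Ioc_ae_eq_Icc (μ := fun _ : Fin m => (volume : Measure ℝ))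
    (f := fun _ => (0:ℝ)) (g := fun _ => 2 * π)).trans
    (Measure.univ_pi_Ico_ae_eq_Icc (μ := fun _ : Fin m => (volume : Measure ℝ))
    (f := fun _ => (0:ℝ)) (g := fun _ => 2 * π)).symm

lemma parseval_zBox {m : ℕ} (f : (Fin m → ℝ) → ℂ) (hf : Continuous f) :
    HasSum (fun α : Fin m → ℤ => ‖(1 / (2 * π : ℂ) ^ m) * ∫ z in zBox m,
        f z * Complex.exp (-Complex.I * ∑ j, (α j : ℂ) * (z j : ℂ))‖ ^ 2)
      (((2 * π) ^ m)⁻¹ * ∫ z in zBox m, ‖f z‖ ^ 2) := by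
  have := parseval_unit (fun z => f ((2 * π) • z)) (by fun_prop)
  convert! this using 1
  · ext α
    have h := integral_zBox_eq (fun z : Fin m → ℝ =>
      f z * Complex.exp (-Complex.I * ∑ j, (α j : ℂ) * (z j : ℂ)))
    simp only [Pi.smul_apply, smul_eq_mul] at h
    rw [h, Complex.real_smul]
    push_cast
    rw [one_div]
  · rw [integral_zBox_eq (fun z => ‖f z‖ ^ 2), smul_eq_mul]

/-! ### Left-invariant vector fields -/

/-- The value at `q` of the left-invariant vector field `∑ⱼ g.1ⱼ Xⱼ + g.2.1ⱼ Yⱼ + g.2.2ⱼ ∂_{zⱼ}`.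
The point `q + vfield g q` is the Heisenberg right translate of `q` by `g`. -/
def vfield {m : ℕ} (g q : Pt m) : Pt m := (g.1, g.2.1, g.2.2 - q.1 * g.2.1)

/-- The derivative of `F` along the left-invariant vector field `vfield g`. It covers `Xop`, `Yop`
and `Zop` at once, taking `g` to be `eX`, `eY` or `eZ`. -/
def Wop {m : ℕ} (g : Pt m) (F : Pt m → ℂ) : Pt m → ℂ := fun q => fderiv ℝ F q (vfield g q)

lemma Xop_eq {m : ℕ} (j : Fin m) : (Xop j : (Pt m → ℂ) → _) = Wop (eX m j) := by
  ext F q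
  simp [Xop, Wop, vfield, eX]

lemma Zop_eq {m : ℕ} (j : Fin m) : (Zop j : (Pt m → ℂ) → _) = Wop (eZ m j) := by
  ext F q
  simp [Zop, Wop, vfield, eZ]

lemma Yop_eq {m : ℕ} (j : Fin m) : (Yop j : (Pt m → ℂ) → _) = Wop (eY m j) := by
  ext F q
  have : vfield (eY m j) q = eY m j - q.1 j • eZ m j := by
    simp only [vfield, eY, eZ, Prod.smul_mk, smul_zero, Prod.mk_sub_mk, sub_zero, zero_sub]
    congr 2
    ext i
    by_cases h : i = j
    · subst h; simp
    · simp [h]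
  rw [Yop, Wop, this, map_sub, map_smul, Complex.real_smul]

lemma vfield_cont {m : ℕ} (g : Pt m) {n : WithTop ℕ∞} : ContDiff ℝ n (vfield g) := by
  unfold vfield
  fun_prop

lemma Wop_contDiff {m : ℕ} (g : Pt m) {F : Pt m → ℂ} (hF : ContDiff ℝ (⊤ : ℕ∞) F) :
    ContDiff ℝ (⊤ : ℕ∞) (Wop g F) := by
  have h : ContDiff ℝ (⊤ : ℕ∞) (fderiv ℝ F) := hF.fderiv_right (by simp)
  exact h.clm_apply (vfield_cont g)

/-- Left translations commute with the curves `t ↦ q + t • vfield g q`. -/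
lemma heisAct_vfield {m : ℕ} (a b c : Fin m → ℝ) (g q : Pt m) (t : ℝ) :
    heisAct a b c (q + t • vfield g q) = heisAct a b c q + t • vfield g (heisAct a b c q) := by
  ext i <;> simp [heisAct, vfield] <;> ring

lemma hasDerivAt_curve {m : ℕ} (g : Pt m) {F : Pt m → ℂ} (hF : Differentiable ℝ F) (q : Pt m)
    (t : ℝ) :
    HasDerivAt (fun t : ℝ => F (q + t • vfield g q)) (fderiv ℝ F (q + t • vfield g q) (vfield g q))
      t := by
  have h1 : HasDerivAt (fun t : ℝ => q + t • vfield g q) (vfield g q) t := by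
    simpa using ((hasDerivAt_id t).smul_const (vfield g q)).const_add q
  exact (hF _).hasFDerivAt.comp_hasDerivAt t h1

lemma Wop_eq_deriv {m : ℕ} (g : Pt m) {F : Pt m → ℂ} (hF : Differentiable ℝ F) (q : Pt m) :
    Wop g F q = deriv (fun t : ℝ => F (q + t • vfield g q)) 0 := by
  rw [(hasDerivAt_curve g hF q 0).deriv]
  simp [Wop]

lemma Wop_periodic {m : ℕ} (g : Pt m) {F : Pt m → ℂ} (hF : Differentiable ℝ F)
    (hp : GPeriodic F) : GPeriodic (Wop g F) := by
  intro a b c h q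
  rw [Wop_eq_deriv g hF, Wop_eq_deriv g hF]
  simp only [← heisAct_vfield, hp a b c h]

lemma Wop_mul {m : ℕ} (g : Pt m) {F G : Pt m → ℂ} (hF : Differentiable ℝ F)
    (hG : Differentiable ℝ G) (q : Pt m) :
    Wop g (fun q => F q * G q) q = Wop g F q * G q + F q * Wop g G q := by
  simp only [Wop]
  rw [fderiv_fun_mul (hF q) (hG q)]
  simp
  ring

lemma Wop_add {m : ℕ} (g : Pt m) {F G : Pt m → ℂ} (hF : Differentiable ℝ F)
    (hG : Differentiable ℝ G) (q : Pt m) :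
    Wop g (fun q => F q + G q) q = Wop g F q + Wop g G q := by
  simp only [Wop]
  rw [fderiv_fun_add (hF q) (hG q)]
  simp

lemma Wop_sub {m : ℕ} (g : Pt m) {F G : Pt m → ℂ} (hF : Differentiable ℝ F)
    (hG : Differentiable ℝ G) (q : Pt m) :
    Wop g (fun q => F q - G q) q = Wop g F q - Wop g G q := by
  simp only [Wop]
  rw [fderiv_fun_sub (hF q) (hG q)]
  simp

lemma Wop_conj {m : ℕ} (g : Pt m) {F : Pt m → ℂ} (hF : Differentiable ℝ F) (q : Pt m) :
    Wop g (fun q => starRingEnd ℂ (F q)) q = starRingEnd ℂ (Wop g F q) := by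
  simp only [Wop]
  have := (Complex.conjCLE.toContinuousLinearMap.hasFDerivAt.comp q (hF q).hasFDerivAt).fderiv
  have h2 : (Complex.conjCLE.toContinuousLinearMap : ℂ → ℂ) ∘ F = fun q => starRingEnd ℂ (F q) := rfl
  rw [h2] at this
  rw [this]
  rfl

/-! ### Averages along the central directions -/

/-- The average of `f` along the `z_j`-circle with weight `K`. On the `z`-frequency `α` it acts as
multiplication by `∫₀^{2π} K(t) e^{i α_j t} dt`. Values in a general space `E` are allowed so that
smoothness can be proved by induction through `fderiv`. -/
def zAvg {m : ℕ} {E : Type} [NormedAddCommGroup E] [NormedSpace ℝ E] [NormedSpace ℂ E]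
    (K : ℝ → ℂ) (j : Fin m) (f : Pt m → E) (q : Pt m) : E :=
  ∫ t in (0 : ℝ)..(2 * π), K t • f (q + t • eZ m j)

section
variable {m : ℕ} {E : Type} [NormedAddCommGroup E] [NormedSpace ℝ E] [NormedSpace ℂ E]
  {K : ℝ → ℂ} (j : Fin m)

lemma zAvg_continuous (hK : Continuous K) {f : Pt m → E} (hf : Continuous f) :
    Continuous (zAvg K j f) := by
  refine intervalIntegral.continuous_parametric_intervalIntegral_of_continuous' ?_ 0 (2 * π)
  simp only [Function.uncurry_def]
  fun_prop

lemma zAvg_hasFDerivAt [IsScalarTower ℝ ℂ E] (hK : Continuous K) {f : Pt m → E} (hf : ContDiff ℝ 1 f)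
    (q : Pt m) : HasFDerivAt (zAvg K j f) (zAvg K j (fderiv ℝ f) q) q := by
  have hfc := hf.continuous
  have hf' : Continuous (fderiv ℝ f) := hf.continuous_fderiv (by simp)
  have hG : Continuous (fun p : Pt m × ℝ => K p.2 • fderiv ℝ f (p.1 + p.2 • eZ m j)) := by fun_prop
  obtain ⟨C, hC⟩ := ((isCompact_closedBall q 1).prod
    (isCompact_Icc (a := (0:ℝ)) (b := 2 * π))).exists_bound_of_continuousOn hG.continuousOn
  refine (intervalIntegral.hasFDerivAt_integral_of_dominated_of_fderiv_le
    (F' := fun x t => K t • fderiv ℝ f (x + t • eZ m j)) (bound := fun _ => C)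
    (Metric.closedBall_mem_nhds q one_pos) ?_ ?_ ?_ ?_ ?_ ?_)
  · refine Eventually.of_forall fun x => Continuous.aestronglyMeasurable (by fun_prop)
  · exact Continuous.intervalIntegrable (by fun_prop) _ _
  · exact Continuous.aestronglyMeasurable (by fun_prop)
  · refine Eventually.of_forall fun t ht x hx => hC (x, t) ⟨hx, ?_⟩
    rw [Set.uIoc_of_le two_pi_pos.le] at ht
    exact ⟨ht.1.le, ht.2⟩
  · simp
  · refine Eventually.of_forall fun t ht x hx => ?_
    have h1 : HasFDerivAt f (fderiv ℝ f (x + t • eZ m j)) (x + t • eZ m j) :=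
      (hf.differentiable (by simp) _).hasFDerivAt
    have h2 := (h1.comp x ((hasFDerivAt_id x).add_const (t • eZ m j))).const_smul (K t)
    rw [ContinuousLinearMap.comp_id] at h2
    exact h2

lemma zAvg_contDiff (n : ℕ) : ∀ {E : Type} [NormedAddCommGroup E] [NormedSpace ℝ E]
    [NormedSpace ℂ E] [IsScalarTower ℝ ℂ E] (_ : Continuous K) {f : Pt m → E},
    ContDiff ℝ n f → ContDiff ℝ n (zAvg K j f) := by
  induction n with
  | zero =>
    intro E _ _ _ _ hK f hf
    exact contDiff_zero.2 (zAvg_continuous j hK (contDiff_zero.1 hf))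
  | succ n ih =>
    intro E _ _ _ _ hK f hf
    have h1 : ContDiff ℝ 1 f := hf.of_le (by norm_cast; omega)
    have hd := zAvg_hasFDerivAt j hK h1
    rw [show ((n + 1 : ℕ) : WithTop ℕ∞) = (n : WithTop ℕ∞) + 1 by norm_cast] at hf ⊢
    rw [contDiff_succ_iff_fderiv] at hf ⊢
    refine ⟨fun q => (hd q).differentiableAt, by simp, ?_⟩
    have : fderiv ℝ (zAvg K j f) = zAvg K j (fderiv ℝ f) := funext fun q => (hd q).fderiv
    rw [this]
    exact ih hK hf.2.2

lemma zAvg_smooth (hK : Continuous K) {f : Pt m → ℂ} (hf : ContDiff ℝ (⊤ : ℕ∞) f) :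
    ContDiff ℝ (⊤ : ℕ∞) (zAvg K j f) := by
  rw [contDiff_infty] at hf ⊢
  exact fun n => zAvg_contDiff j n hK (hf n)

lemma vfield_shift (g q : Pt m) (t : ℝ) : vfield g (q + t • eZ m j) = vfield g q := by
  simp [vfield, eZ]

lemma Wop_zAvg (hK : Continuous K) (g : Pt m) {f : Pt m → ℂ} (hf : ContDiff ℝ (⊤ : ℕ∞) f) :
    Wop g (zAvg K j f) = zAvg K j (Wop g f) := by
  ext q
  have h1 : ContDiff ℝ 1 f := hf.of_le (by norm_cast)
  have hf' : Continuous (fderiv ℝ f) := h1.continuous_fderiv (by simp)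
  rw [Wop, (zAvg_hasFDerivAt j hK h1 q).fderiv, zAvg, zAvg, ContinuousLinearMap.intervalIntegral_apply]
  · simp only [Wop, vfield_shift]
    rfl
  · exact Continuous.intervalIntegrable (by fun_prop) _ _

lemma heisAct_shift (a b c : Fin m → ℝ) (q : Pt m) (t : ℝ) :
    heisAct a b c (q + t • eZ m j) = heisAct a b c q + t • eZ m j := by
  ext i <;> simp [heisAct, eZ]
  ring

lemma zAvg_periodic {f : Pt m → ℂ} (hf : GPeriodic f) : GPeriodic (zAvg K j f) := by
  intro a b c h q
  simp only [zAvg, ← heisAct_shift, hf a b c h]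

lemma periodic_shift {f : Pt m → ℂ} (hf : GPeriodic f) (q : Pt m) :
    f (q + (2 * π) • eZ m j) = f q := by
  have := hf 0 0 (Pi.single j (2 * π)) ⟨fun _ => ⟨0, by simp⟩, fun _ => ⟨0, by simp⟩, fun i => ?_⟩ q
  · rw [← this]
    congr 1
    ext i
    · simp [heisAct, eZ]
    · simp [heisAct, eZ]
    · by_cases h : i = j
      · subst h; simp [heisAct, eZ, add_comm]
      · simp [heisAct, eZ, h]
  · by_cases h : i = j
    · subst h; exact ⟨1, by simp⟩
    · exact ⟨0, by simp [h]⟩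

end

/-- The sawtooth kernel, with Fourier coefficients `1 / l` for `l ≠ 0` and `0` for `l = 0`: averaging
against it inverts `-i ∂_{z_j}` on functions of nonzero `z_j`-frequency. -/
def sawK (t : ℝ) : ℂ := Complex.I / (2 * π) * (t - π)

lemma sawK_cont : Continuous sawK := by unfold sawK; fun_prop

lemma hasDerivAt_sawK (t : ℝ) : HasDerivAt sawK (Complex.I / (2 * π)) t := by
  have : HasDerivAt (fun t : ℝ => (t : ℂ) - π) 1 t := (Complex.ofRealCLM.hasDerivAt (x := t)).sub_const _
  have h := this.const_mul (Complex.I / (2 * π : ℂ))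
  rw [mul_one] at h
  exact h

/-- Averaging against the sawtooth inverts `-i ∂_{z_j}` up to the mean over the `z_j`-circle. -/
lemma Zop_sawK {m : ℕ} (j : Fin m) {f : Pt m → ℂ} (hf : ContDiff ℝ (⊤ : ℕ∞) f) (hp : GPeriodic f)
    (q : Pt m) : Zop j (zAvg sawK j f) q =
      Complex.I * f q - Complex.I / (2 * π) * zAvg (fun _ => 1) j f q := by
  rw [Zop_eq, Wop_zAvg j sawK_cont _ hf, zAvg, zAvg]
  have hd : ∀ t, HasDerivAt (fun t : ℝ => f (q + t • eZ m j)) (Wop (eZ m j) f (q + t • eZ m j)) t := by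
    intro t
    have h := hasDerivAt_curve (eZ m j) (hf.differentiable (by simp)) q t
    have hv : ∀ q, vfield (eZ m j) q = eZ m j := by intro q; simp [vfield, eZ]
    simp only [hv] at h
    simpa [Wop, hv] using h
  have hc := (Wop_contDiff (eZ m j) hf).continuous
  simp only [smul_eq_mul]
  rw [intervalIntegral.integral_mul_deriv_eq_deriv_mul (fun t _ => hasDerivAt_sawK t)
    (fun t _ => hd t) (by simp) (Continuous.intervalIntegrable (by fun_prop) _ _),
    periodic_shift j hp, intervalIntegral.integral_const_mul]
  have : (π : ℂ) ≠ 0 := by exact_mod_cast pi_ne_zero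
  simp [sawK]
  field_simp
  ring

lemma integral_exp_zero {l : ℤ} (hl : l ≠ 0) :
    ∫ t in (0 : ℝ)..(2 * π), Complex.exp (Complex.I * l * t) = 0 := by
  have hl' : (l : ℂ) ≠ 0 := by exact_mod_cast hl
  rw [integral_exp_mul_complex (mul_ne_zero Complex.I_ne_zero hl')]
  have : Complex.I * l * ((2 * π : ℝ) : ℂ) = l * (2 * π * Complex.I) := by push_cast; ring
  rw [this, Complex.exp_int_mul_two_pi_mul_I]
  simp

lemma integral_exp_sawK {l : ℤ} (hl : l ≠ 0) :
    ∫ t in (0 : ℝ)..(2 * π), sawK t * Complex.exp (Complex.I * l * t) = 1 / l := by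
  have hl' : (l : ℂ) ≠ 0 := by exact_mod_cast hl
  have hπ : (π : ℂ) ≠ 0 := by exact_mod_cast pi_ne_zero
  have hd : ∀ t : ℝ, HasDerivAt (fun t : ℝ => Complex.exp (Complex.I * l * t) / (Complex.I * l))
      (Complex.exp (Complex.I * l * t)) t := by
    intro t
    have h0 : HasDerivAt (fun t : ℝ => (t : ℂ)) 1 t := Complex.ofRealCLM.hasDerivAt (x := t)
    have h := ((h0.const_mul (Complex.I * l)).cexp).div_const (Complex.I * l)
    convert! h using 1
    field_simp [Complex.I_ne_zero]
  rw [intervalIntegral.integral_mul_deriv_eq_deriv_mul (fun t _ => hasDerivAt_sawK t)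
    (fun t _ => hd t) (by simp) (Continuous.intervalIntegrable (by fun_prop) _ _),
    intervalIntegral.integral_const_mul, intervalIntegral.integral_div, integral_exp_zero hl]
  have : Complex.I * l * ((2 * π : ℝ) : ℂ) = l * (2 * π * Complex.I) := by push_cast; ring
  rw [this, Complex.exp_int_mul_two_pi_mul_I]
  simp [sawK]
  field_simp
  ring_nf
  simp

/-! ### Integration over the fundamental domain -/

/-- The box `[0, √(2π))^m`, used for both the `x`- and the `y`-variables. -/
abbrev xBox (m : ℕ) : Set (Fin m → ℝ) := Set.univ.pi fun _ => Set.Ico (0:ℝ) (√(2 * π))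

lemma Dset_eq (m : ℕ) : Dset m = xBox m ×ˢ (xBox m ×ˢ zBox m) := by
  ext q
  simp only [Dset, zBox, Set.mem_ofPred_eq, Set.mem_prod, Set.mem_pi, Set.mem_univ, true_imp_iff]
  simp only [← forall_and]

lemma Dset_subset_compact (m : ℕ) : ∃ S : Set (Pt m), IsCompact S ∧ Dset m ⊆ S := by
  refine ⟨(Set.univ.pi fun _ => Set.Icc (0:ℝ) (√(2 * π))) ×ˢ
    ((Set.univ.pi fun _ => Set.Icc (0:ℝ) (√(2 * π))) ×ˢ
    (Set.univ.pi fun _ => Set.Icc (0:ℝ) (2 * π))), ?_, ?_⟩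
  · exact (isCompact_univ_pi fun _ => isCompact_Icc).prod
      ((isCompact_univ_pi fun _ => isCompact_Icc).prod (isCompact_univ_pi fun _ => isCompact_Icc))
  · rw [Dset_eq]
    exact Set.prod_mono (Set.pi_mono fun _ _ => Set.Ico_subset_Icc_self)
      (Set.prod_mono (Set.pi_mono fun _ _ => Set.Ico_subset_Icc_self)
      (Set.pi_mono fun _ _ => Set.Ico_subset_Icc_self))

lemma measurableSet_Dset (m : ℕ) : MeasurableSet (Dset m) := by
  rw [Dset_eq]
  exact (MeasurableSet.univ_pi fun _ => measurableSet_Ico).prod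
    ((MeasurableSet.univ_pi fun _ => measurableSet_Ico).prod
    (MeasurableSet.univ_pi fun _ => measurableSet_Ico))

lemma intD {m : ℕ} {E : Type*} [NormedAddCommGroup E] {F : Pt m → E} (hF : Continuous F) :
    IntegrableOn F (Dset m) := by
  obtain ⟨S, hS, hD⟩ := Dset_subset_compact m
  exact (hF.continuousOn.integrableOn_compact hS).mono_set hD

lemma bddD {m : ℕ} {E : Type*} [NormedAddCommGroup E] {F : Pt m → E} (hF : Continuous F) :
    ∃ C, 0 ≤ C ∧ ∀ q ∈ Dset m, ‖F q‖ ≤ C := by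
  obtain ⟨S, hS, hD⟩ := Dset_subset_compact m
  obtain ⟨C, hC⟩ := hS.exists_bound_of_continuousOn hF.continuousOn
  exact ⟨max C 0, le_max_right _ _, fun q hq => (hC q (hD hq)).trans (le_max_left _ _)⟩

lemma intD_slice {m : ℕ} {E : Type*} [NormedAddCommGroup E] {F : Pt m → E} (hF : Continuous F)
    (x : Fin m → ℝ) : IntegrableOn (fun p : (Fin m → ℝ) × (Fin m → ℝ) => F (x, p)) (xBox m ×ˢ zBox m) := by
  have hS : IsCompact ((Set.univ.pi fun _ : Fin m => Set.Icc (0:ℝ) (√(2 * π))) ×ˢ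
    (Set.univ.pi fun _ : Fin m => Set.Icc (0:ℝ) (2 * π))) :=
    (isCompact_univ_pi fun _ => isCompact_Icc).prod (isCompact_univ_pi fun _ => isCompact_Icc)
  refine (Continuous.continuousOn (by fun_prop)).integrableOn_compact hS |>.mono_set ?_
  exact Set.prod_mono (Set.pi_mono fun _ _ => Set.Ico_subset_Icc_self)
      (Set.pi_mono fun _ _ => Set.Ico_subset_Icc_self)

lemma integral_D {m : ℕ} {E : Type*} [NormedAddCommGroup E] [NormedSpace ℝ E] {F : Pt m → E}
    (hF : Continuous F) :
    ∫ q in Dset m, F q = ∫ x in xBox m, ∫ y in xBox m, ∫ z in zBox m, F (x, y, z) := by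
  have h := intD hF
  rw [Dset_eq] at h ⊢
  rw [Measure.volume_eq_prod] at h ⊢
  rw [setIntegral_prod _ h]
  congr 1
  ext x
  have h2 := intD_slice hF x
  rw [Measure.volume_eq_prod] at h2 ⊢
  rw [setIntegral_prod _ h2]

lemma integrable_outer {m : ℕ} {E : Type*} [NormedAddCommGroup E] [NormedSpace ℝ E] {F : Pt m → E}
    (hF : Continuous F) :
    Integrable (fun x => ∫ y in xBox m, ∫ z in zBox m, F (x, y, z)) (volume.restrict (xBox m)) := by
  have h := intD hF
  rw [Dset_eq, IntegrableOn, Measure.volume_eq_prod, ← Measure.prod_restrict] at h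
  refine h.integral_prod_left.congr (Eventually.of_forall fun x => ?_)
  have h2 := intD_slice hF x
  simp only
  rw [Measure.volume_eq_prod] at h2 ⊢
  rw [setIntegral_prod _ h2]

lemma two_pi_sqrt_pos : 0 < √(2 * π) := Real.sqrt_pos.2 two_pi_pos

lemma inner_z_shift {m : ℕ} {F : Pt m → ℂ} (hp : GPeriodic F) (x y s : Fin m → ℝ) :
    ∫ z in zBox m, F (x, y, s + z) = ∫ z in zBox m, F (x, y, z) := by
  refine integral_box_add two_pi_pos (f := fun z => F (x, y, z)) (fun z k => ?_) s
  have := hp 0 0 (fun i => k i * (2 * π)) ⟨fun _ => ⟨0, by simp⟩, fun _ => ⟨0, by simp⟩,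
    fun i => ⟨k i, rfl⟩⟩ (x, y, z)
  rw [← this]
  simp [heisAct]

lemma inner_y_shift {m : ℕ} {F : Pt m → ℂ} (hp : GPeriodic F) (x s : Fin m → ℝ) :
    ∫ y in xBox m, ∫ z in zBox m, F (x, s + y, z) = ∫ y in xBox m, ∫ z in zBox m, F (x, y, z) := by
  refine integral_box_add two_pi_sqrt_pos (f := fun y => ∫ z in zBox m, F (x, y, z)) (fun y k => ?_) s
  congr 1
  ext z
  have := hp 0 (fun i => k i * √(2 * π)) 0 ⟨fun _ => ⟨0, by simp⟩, fun i => ⟨k i, rfl⟩,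
    fun _ => ⟨0, by simp⟩⟩ (x, y, z)
  rw [← this]
  simp [heisAct]

lemma inner_x_shift {m : ℕ} {F : Pt m → ℂ} (hp : GPeriodic F) (s : Fin m → ℝ) :
    ∫ x in xBox m, ∫ y in xBox m, ∫ z in zBox m, F (s + x, y, z) =
      ∫ x in xBox m, ∫ y in xBox m, ∫ z in zBox m, F (x, y, z) := by
  refine integral_box_add two_pi_sqrt_pos
    (f := fun x => ∫ y in xBox m, ∫ z in zBox m, F (x, y, z)) (fun x k => ?_) s
  congr 1
  ext y
  -- the twist in `z` caused by the translation in `x` is absorbed by the `z`-integral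
  rw [← inner_z_shift hp x y (fun i => (k i * √(2 * π)) * y i)]
  congr 1
  ext z
  have := hp (fun i => k i * √(2 * π)) 0 0 ⟨fun i => ⟨k i, rfl⟩, fun _ => ⟨0, by simp⟩,
    fun _ => ⟨0, by simp⟩⟩ (x, y, (fun i => (k i * √(2 * π)) * y i) + z)
  rw [← this]
  simp [heisAct]

/-- Right translations preserve the integral of a periodic function over the fundamental domain. -/
lemma integral_flow {m : ℕ} {F : Pt m → ℂ} (hF : Continuous F) (hp : GPeriodic F) (g : Pt m) :
    ∫ q in Dset m, F (q + vfield g q) = ∫ q in Dset m, F q := by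
  have hv : Continuous (vfield g) := (vfield_cont g (n := 0)).continuous
  rw [integral_D hF, integral_D (by fun_prop), ← inner_x_shift hp g.1]
  congr 1
  ext x
  rw [← inner_y_shift hp _ g.2.1]
  congr 1
  ext y
  rw [← inner_z_shift hp _ _ (g.2.2 - x * g.2.1)]
  congr 1
  ext z
  simp only [vfield, Prod.mk_add_mk, add_comm]

lemma vfield_smul {m : ℕ} (t : ℝ) (g q : Pt m) : vfield (t • g) q = t • vfield g q := by
  ext i <;> simp [vfield]
  ring

/-- Integration by parts: left-invariant derivatives of periodic functions have integral zero. This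
is the derivative at `t = 0` of the invariance of the integral under right translation by `t • g`. -/
lemma integral_Wop {m : ℕ} {F : Pt m → ℂ} (hF : ContDiff ℝ (⊤ : ℕ∞) F) (hp : GPeriodic F)
    (g : Pt m) : ∫ q in Dset m, Wop g F q = 0 := by
  have hFc := hF.continuous
  have hv : Continuous (vfield g) := (vfield_cont g (n := 0)).continuous
  have hF' : Continuous (fderiv ℝ F) := hF.continuous_fderiv (by simp)
  have hG : Continuous (fun p : Pt m × ℝ => fderiv ℝ F (p.1 + p.2 • vfield g p.1) (vfield g p.1)) := by
    fun_prop
  obtain ⟨S, hS, hD⟩ := Dset_subset_compact m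
  obtain ⟨C, hC⟩ := (hS.prod (isCompact_closedBall (0:ℝ) 1)).exists_bound_of_continuousOn
    hG.continuousOn
  have hd := hasDerivAt_integral_of_dominated_loc_of_deriv_le (μ := volume.restrict (Dset m))
    (F := fun (t : ℝ) q => F (q + t • vfield g q)) (x₀ := 0)
    (F' := fun t q => fderiv ℝ F (q + t • vfield g q) (vfield g q)) (bound := fun _ => C)
    (Metric.closedBall_mem_nhds (0:ℝ) one_pos)
    (Eventually.of_forall fun t => Continuous.aestronglyMeasurable (by fun_prop))
    (intD (by fun_prop)) (Continuous.aestronglyMeasurable (by fun_prop))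
    ((ae_restrict_mem (measurableSet_Dset m)).mono fun q hq t ht => hC (q, t) ⟨hD hq, ht⟩)
    (intD continuous_const)
    (Eventually.of_forall fun q t _ => hasDerivAt_curve g (hF.differentiable (by simp)) q t)
  have h2 := hd.2
  simp only [← vfield_smul, integral_flow hFc hp, zero_smul] at h2
  have h3 := h2.unique (hasDerivAt_const (0:ℝ) _)
  rw [← h3]
  congr 1
  ext q
  simp [Wop]

/-- The averages along `z_j` are Fourier multipliers in `z`. -/
lemma zFourier_zAvg {m : ℕ} (j : Fin m) {K : ℝ → ℂ} (hK : Continuous K) {f : Pt m → ℂ}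
    (hf : Continuous f) (hp : GPeriodic f) (α : Fin m → ℤ) (x y : Fin m → ℝ) :
    zFourier (zAvg K j f) α x y =
      (∫ t in (0:ℝ)..(2 * π), K t * Complex.exp (Complex.I * α j * t)) * zFourier f α x y := by
  simp only [zFourier]
  rw [mul_left_comm]
  congr 1
  have key : ∀ t : ℝ, ∫ z in zBox m, f ((x, y, z) + t • eZ m j) *
      Complex.exp (-Complex.I * ∑ i, (α i : ℂ) * (z i : ℂ)) =
      Complex.exp (Complex.I * α j * t) * ∫ z in zBox m, f (x, y, z) *
      Complex.exp (-Complex.I * ∑ i, (α i : ℂ) * (z i : ℂ)) := by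
    intro t
    have hb := integral_box_add two_pi_pos (f := fun z => f (x, y, z) *
      Complex.exp (-Complex.I * ∑ i, (α i : ℂ) * (z i : ℂ))) ?_ (Pi.single j t)
    · rw [zBox, ← hb, ← integral_const_mul]
      refine integral_congr_ae (Eventually.of_forall fun z => ?_)
      have h1 : (x, y, z) + t • eZ m j = (x, y, Pi.single j t + z) := by
        ext i
        · simp [eZ]
        · simp [eZ]
        · by_cases h : i = j
          · subst h; simp [eZ, add_comm]
          · simp [eZ, h]
      have h2 : ∑ i, (α i : ℂ) * (((Pi.single j t + z : Fin m → ℝ) i : ℝ) : ℂ) =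
          α j * t + ∑ i, (α i : ℂ) * (z i : ℂ) := by
        simp only [Pi.add_apply, Complex.ofReal_add, mul_add, Finset.sum_add_distrib]
        congr 1
        rw [Finset.sum_eq_single j]
        · simp
        · intro i _ h; simp [h]
        · simp
      simp only [h1, h2]
      rw [mul_left_comm, ← Complex.exp_add]
      congr 2
      ring
    · intro z k
      have h1 := hp 0 0 (fun i => k i * (2 * π)) ⟨fun _ => ⟨0, by simp⟩, fun _ => ⟨0, by simp⟩,
        fun i => ⟨k i, rfl⟩⟩ (x, y, z)
      have h1' : f (x, y, fun i => k i * (2 * π) + z i) = f (x, y, z) := by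
        rw [← h1]; simp [heisAct]
      simp only [h1']
      congr 1
      rw [Complex.exp_eq_exp_iff_exists_int]
      refine ⟨-∑ i, α i * k i, ?_⟩
      push_cast
      simp only [mul_add, Finset.sum_add_distrib]
      have hs : ∑ i, (α i : ℂ) * ((k i : ℂ) * (2 * π)) = (∑ i, (α i : ℂ) * (k i : ℂ)) * (2 * π) := by
        rw [Finset.sum_mul]
        exact Finset.sum_congr rfl fun i _ => by ring
      rw [hs]
      ring
  simp only [zAvg, smul_eq_mul]
  rw [← intervalIntegral.integral_mul_const]
  have key2 : ∀ t : ℝ, (K t * Complex.exp (Complex.I * α j * t)) * ∫ z in zBox m, f (x, y, z) *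
      Complex.exp (-Complex.I * ∑ i, (α i : ℂ) * (z i : ℂ)) =
      K t * ∫ z in zBox m, f ((x, y, z) + t • eZ m j) *
      Complex.exp (-Complex.I * ∑ i, (α i : ℂ) * (z i : ℂ)) := by
    intro t; rw [key, mul_assoc]
  simp only [key2]
  simp only [← intervalIntegral.integral_mul_const, ← integral_const_mul]
  simp only [intervalIntegral.integral_of_le two_pi_pos.le]
  rw [integral_integral_swap]
  · simp only [mul_assoc]
  · rw [Measure.prod_restrict]
    refine IntegrableOn.mono_set (t := (Set.univ.pi fun _ => Set.Icc (0:ℝ) (2 * π)) ×ˢ Set.Icc (0:ℝ) (2 * π)) ?_ ?_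
    · refine ContinuousOn.integrableOn_compact ((isCompact_univ_pi fun _ => isCompact_Icc).prod isCompact_Icc) ?_
      refine Continuous.continuousOn ?_
      simp only [Function.uncurry_def]
      fun_prop
    · exact Set.prod_mono (Set.pi_mono fun _ _ => Set.Ico_subset_Icc_self) Set.Ioc_subset_Icc_self

/-- An `L²` bound for averages: the multiplier only has to be bounded by `κ` on the `z`-frequencies
that occur in `f`. -/
lemma zAvg_L2 {m : ℕ} (j : Fin m) {K : ℝ → ℂ} (hK : Continuous K) {f : Pt m → ℂ}
    (hf : Continuous f) (hp : GPeriodic f) (κ : ℝ)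
    (h : ∀ α : Fin m → ℤ, (∀ x y, zFourier f α x y = 0) ∨
      ‖∫ t in (0:ℝ)..(2 * π), K t * Complex.exp (Complex.I * α j * t)‖ ≤ κ) :
    ∫ q in Dset m, ‖zAvg K j f q‖ ^ 2 ≤ κ ^ 2 * ∫ q in Dset m, ‖f q‖ ^ 2 := by
  have hc := zAvg_continuous j hK hf
  have hz : ∀ x y : Fin m → ℝ, ∫ z in zBox m, ‖zAvg K j f (x, y, z)‖ ^ 2 ≤
      κ ^ 2 * ∫ z in zBox m, ‖f (x, y, z)‖ ^ 2 := by
    intro x y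
    have p1 := parseval_zBox (fun z => zAvg K j f (x, y, z)) (by fun_prop)
    have p2 := (parseval_zBox (fun z => f (x, y, z)) (by fun_prop)).mul_left (κ ^ 2)
    have := hasSum_le (fun α => ?_) p1 p2
    · rw [mul_left_comm] at this
      exact le_of_mul_le_mul_left this (by positivity)
    · change ‖zFourier (zAvg K j f) α x y‖ ^ 2 ≤ κ ^ 2 * ‖zFourier f α x y‖ ^ 2
      rw [zFourier_zAvg j hK hf hp]
      rcases h α with h | h
      · rw [h]; simp
      · rw [norm_mul, mul_pow]
        gcongr
  rw [integral_D (by fun_prop), integral_D (by fun_prop), ← integral_const_mul]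
  refine integral_mono_of_nonneg (Eventually.of_forall fun x => by positivity) ?_
    (Eventually.of_forall fun x => ?_)
  · exact (integrable_outer (F := fun q => ‖f q‖ ^ 2) (by fun_prop)).const_mul _
  · simp only
    rw [← integral_const_mul]
    refine integral_mono_of_nonneg (Eventually.of_forall fun y => by positivity) ?_
      (Eventually.of_forall fun y => hz x y)
    have := intD_slice (F := fun q => ‖f q‖ ^ 2) (by fun_prop) x
    rw [IntegrableOn, Measure.volume_eq_prod, ← Measure.prod_restrict] at this
    exact this.integral_prod_left.const_mul _

/-! ### Green's identity and the key estimate -/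

/-- The Cauchy–Schwarz inequality on the fundamental domain. -/
lemma cs {m : ℕ} {F G : Pt m → ℂ} (hF : Continuous F) (hG : Continuous G) {A B : ℝ} (hA : 0 < A)
    (hB : 0 < B) (h1 : ∫ q in Dset m, ‖F q‖ ^ 2 ≤ A ^ 2) (h2 : ∫ q in Dset m, ‖G q‖ ^ 2 ≤ B ^ 2) :
    ∫ q in Dset m, ‖F q‖ * ‖G q‖ ≤ A * B := by
  have h : ∫ q in Dset m, ‖F q‖ * ‖G q‖ ≤
      ∫ q in Dset m, (B / (2 * A) * ‖F q‖ ^ 2 + A / (2 * B) * ‖G q‖ ^ 2) := by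
    refine integral_mono (intD (by fun_prop)) (intD (by fun_prop)) fun q => ?_
    have : B / (2 * A) * ‖F q‖ ^ 2 + A / (2 * B) * ‖G q‖ ^ 2 - ‖F q‖ * ‖G q‖ =
        (B * ‖F q‖ - A * ‖G q‖) ^ 2 / (2 * A * B) := by field_simp; ring
    have h0 : 0 ≤ (B * ‖F q‖ - A * ‖G q‖) ^ 2 / (2 * A * B) := by positivity
    simp only
    linarith
  refine h.trans ?_
  rw [integral_add (intD (by fun_prop)) (intD (by fun_prop)), integral_const_mul, integral_const_mul]
  calc _ ≤ B / (2 * A) * A ^ 2 + A / (2 * B) * B ^ 2 := by gcongr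
    _ = A * B := by field_simp; ring

lemma cs_bound {m : ℕ} {c F G : Pt m → ℂ} (hF : Continuous F)
    (hG : Continuous G) {A B C : ℝ} (hC : 0 ≤ C) (hcC : ∀ q ∈ Dset m, ‖c q‖ ≤ C) (hA : 0 < A)
    (hB : 0 < B) (h1 : ∫ q in Dset m, ‖F q‖ ^ 2 ≤ A ^ 2) (h2 : ∫ q in Dset m, ‖G q‖ ^ 2 ≤ B ^ 2) :
    ‖∫ q in Dset m, c q * F q * G q‖ ≤ C * (A * B) := by
  calc _ ≤ ∫ q in Dset m, C * (‖F q‖ * ‖G q‖) := by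
        refine norm_integral_le_of_norm_le (intD (by fun_prop)) ?_
        filter_upwards [ae_restrict_mem (measurableSet_Dset m)] with q hq
        rw [norm_mul, norm_mul, mul_assoc]
        exact mul_le_mul_of_nonneg_right (hcC q hq) (by positivity)
    _ = C * ∫ q in Dset m, ‖F q‖ * ‖G q‖ := integral_const_mul _ _
    _ ≤ _ := mul_le_mul_of_nonneg_left (cs hF hG hA hB h1 h2) hC

section
variable {m : ℕ}

lemma GPeriodic.mul' {F G : Pt m → ℂ} (hF : GPeriodic F) (hG : GPeriodic G) :
    GPeriodic (fun q => F q * G q) := by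
  intro a b c h q; simp only [hF a b c h q, hG a b c h q]

lemma GPeriodic.add' {F G : Pt m → ℂ} (hF : GPeriodic F) (hG : GPeriodic G) :
    GPeriodic (fun q => F q + G q) := by
  intro a b c h q; simp only [hF a b c h q, hG a b c h q]

lemma GPeriodic.sub' {F G : Pt m → ℂ} (hF : GPeriodic F) (hG : GPeriodic G) :
    GPeriodic (fun q => F q - G q) := by
  intro a b c h q; simp only [hF a b c h q, hG a b c h q]

lemma GPeriodic.conj' {F : Pt m → ℂ} (hF : GPeriodic F) :
    GPeriodic (fun q => starRingEnd ℂ (F q)) := by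
  intro a b c h q; simp only [hF a b c h q]

lemma conj_smooth {F : Pt m → ℂ} (hF : ContDiff ℝ (⊤ : ℕ∞) F) :
    ContDiff ℝ (⊤ : ℕ∞) (fun q => starRingEnd ℂ (F q)) :=
  Complex.conjCLE.contDiff.comp hF

/-- Green's identity for one vector field, weighted by `b`, with all derivatives of the remainder
falling on `b` and `Φ`: the integrand is the divergence of
`b χ (WΦ) - b Φ (Wχ) + (Wb) Φ χ`. -/
lemma green (g : Pt m) {b Φ χ : Pt m → ℂ} (hb : ContDiff ℝ (⊤ : ℕ∞) b)
    (hΦ : ContDiff ℝ (⊤ : ℕ∞) Φ) (hχ : ContDiff ℝ (⊤ : ℕ∞) χ) (pb : GPeriodic b)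
    (pΦ : GPeriodic Φ) (pχ : GPeriodic χ) :
    ∫ q in Dset m, (b q * χ q * Wop g (Wop g Φ) q - b q * Φ q * Wop g (Wop g χ) q
      + 2 * (Wop g b q * Wop g Φ q * χ q) + Wop g (Wop g b) q * Φ q * χ q) = 0 := by
  have hb1 := Wop_contDiff g hb
  have hΦ1 := Wop_contDiff g hΦ
  have hχ1 := Wop_contDiff g hχ
  have db := hb.differentiable (by simp)
  have dΦ := hΦ.differentiable (by simp)
  have dχ := hχ.differentiable (by simp)
  have db1 := hb1.differentiable (by simp)
  have dΦ1 := hΦ1.differentiable (by simp)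
  have dχ1 := hχ1.differentiable (by simp)
  have pb1 := Wop_periodic g db pb
  have pΦ1 := Wop_periodic g dΦ pΦ
  have pχ1 := Wop_periodic g dχ pχ
  have key := integral_Wop (F := fun q => b q * χ q * Wop g Φ q - b q * Φ q * Wop g χ q
    + Wop g b q * Φ q * χ q) (by fun_prop)
    ((((pb.mul' pχ).mul' pΦ1).sub' ((pb.mul' pΦ).mul' pχ1)).add' ((pb1.mul' pΦ).mul' pχ)) g
  rw [← key]
  congr 1
  ext q
  rw [Wop_add g (by fun_prop) (by fun_prop), Wop_sub g (by fun_prop) (by fun_prop),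
    Wop_mul g (by fun_prop) dΦ1, Wop_mul g db dχ, Wop_mul g (by fun_prop) dχ1, Wop_mul g db dΦ,
    Wop_mul g (by fun_prop) dχ, Wop_mul g db1 dΦ]
  ring

/-- The key estimate. If `Φ` and `ψ` solve the oscillator equations with eigenvalues `N` and `N'`
and `∂_{z_j} Φ = i φ`, then commuting `Δ_j` past `b` in `⟨b Φ, ψ⟩` shows that `(N - N') ∫ b φ ψ̄`
consists only of terms in which a derivative of `b` multiplies `Φ`, `X_j Φ` or `Y_j Φ`. The constant
depends on `b`, `N`, `N'` only. -/
lemma core_bound (j : Fin m) {b : Pt m → ℂ} (hb : ContDiff ℝ (⊤ : ℕ∞) b) (pb : GPeriodic b)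
    (N N' : ℂ) : ∃ C : ℝ, 0 ≤ C ∧ ∀ φ ψ Φ : Pt m → ℂ, Continuous φ → ContDiff ℝ (⊤ : ℕ∞) ψ →
      ContDiff ℝ (⊤ : ℕ∞) Φ → GPeriodic ψ → GPeriodic Φ →
      (∀ q, -DeltaJ j ψ q = N' * (-Complex.I * Zop j ψ q)) → starRingEnd ℂ N' = N' →
      (∀ q, -DeltaJ j Φ q = N * (-Complex.I * Zop j Φ q)) →
      (∀ᵐ q ∂volume.restrict (Dset m), Zop j Φ q = Complex.I * φ q) →
      ∀ κ E : ℝ, 0 < κ → 0 < E → ∫ q in Dset m, ‖ψ q‖ ^ 2 = 1 →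
      ∫ q in Dset m, ‖Φ q‖ ^ 2 ≤ κ ^ 2 → ∫ q in Dset m, ‖Xop j Φ q‖ ^ 2 ≤ E ^ 2 →
      ∫ q in Dset m, ‖Yop j Φ q‖ ^ 2 ≤ E ^ 2 →
      ‖(N - N') * ∫ q in Dset m, b q * φ q * starRingEnd ℂ (ψ q)‖ ≤ C * (κ + E) := by
  have sX := Wop_contDiff (eX m j) hb
  have sY := Wop_contDiff (eY m j) hb
  have sZ := Wop_contDiff (eZ m j) hb
  have sXX := Wop_contDiff (eX m j) sX
  have sYY := Wop_contDiff (eY m j) sY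
  obtain ⟨CX, hCX0, hCX⟩ := bddD (F := fun q => 2 * Wop (eX m j) b q) (by fun_prop)
  obtain ⟨CY, hCY0, hCY⟩ := bddD (F := fun q => 2 * Wop (eY m j) b q) (by fun_prop)
  obtain ⟨C0, hC00, hC0⟩ := bddD (F := fun q => Wop (eX m j) (Wop (eX m j) b) q +
    Wop (eY m j) (Wop (eY m j) b) q - Complex.I * N' * Wop (eZ m j) b q) (by fun_prop)
  refine ⟨CX + CY + C0, by positivity, ?_⟩
  intro φ ψ Φ hφ hψ hΦ pψ pΦ oψ hN' oΦ hZ κ E hκ hE nψ nΦ nX nY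
  set χ : Pt m → ℂ := fun q => starRingEnd ℂ (ψ q) with hχdef
  have hχ : ContDiff ℝ (⊤ : ℕ∞) χ := conj_smooth hψ
  have pχ : GPeriodic χ := pψ.conj'
  have dψ := hψ.differentiable (by simp)
  have db := hb.differentiable (by simp)
  have dΦ := hΦ.differentiable (by simp)
  have dχ := hχ.differentiable (by simp)
  have nχ : ∫ q in Dset m, ‖χ q‖ ^ 2 ≤ 1 ^ 2 := by
    simp only [hχdef, RCLike.norm_conj, nψ]; norm_num
  have tX := Wop_contDiff (eX m j) hΦ
  have tY := Wop_contDiff (eY m j) hΦ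
  have tZ := Wop_contDiff (eZ m j) hΦ
  have tXX := Wop_contDiff (eX m j) tX
  have tYY := Wop_contDiff (eY m j) tY
  have uX := Wop_contDiff (eX m j) hχ
  have uY := Wop_contDiff (eY m j) hχ
  have uZ := Wop_contDiff (eZ m j) hχ
  have uXX := Wop_contDiff (eX m j) uX
  have uYY := Wop_contDiff (eY m j) uY
  have oχ : ∀ q, Wop (eX m j) (Wop (eX m j) χ) q + Wop (eY m j) (Wop (eY m j) χ) q =
      -N' * (Complex.I * Wop (eZ m j) χ q) := by
    intro q
    have h1 : ∀ g : Pt m, Wop g χ = fun q => starRingEnd ℂ (Wop g ψ q) :=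
      fun g => funext fun q => Wop_conj g dψ q
    have h2 : ∀ g : Pt m, Wop g (Wop g χ) = fun q => starRingEnd ℂ (Wop g (Wop g ψ) q) := by
      intro g
      rw [h1]
      exact funext fun q => Wop_conj g ((Wop_contDiff g hψ).differentiable (by simp)) q
    rw [h2, h2, h1]
    have h3 := congrArg (starRingEnd ℂ) (oψ q)
    simp only [DeltaJ, Xop_eq, Yop_eq, Zop_eq, map_neg, map_add, map_mul, hN', Complex.conj_I] at h3
    linear_combination -h3
  have gX := green (eX m j) hb hΦ hχ pb pΦ pχ
  have gY := green (eY m j) hb hΦ hχ pb pΦ pχ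
  have gZ := integral_Wop (F := fun q => b q * Φ q * χ q) (by fun_prop)
    ((pb.mul' pΦ).mul' pχ) (eZ m j)
  have total : (N - N') * ∫ q in Dset m, b q * φ q * χ q =
      (∫ q in Dset m, (2 * Wop (eX m j) b q) * Wop (eX m j) Φ q * χ q) +
      (∫ q in Dset m, (2 * Wop (eY m j) b q) * Wop (eY m j) Φ q * χ q) +
      ∫ q in Dset m, (Wop (eX m j) (Wop (eX m j) b) q +
    Wop (eY m j) (Wop (eY m j) b) q - Complex.I * N' * Wop (eZ m j) b q) * Φ q * χ q := by
    -- The three integrals of exact derivatives vanish, so they may be added to the right-hand side.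
    have e1 : ∀ A B C D G H J : ℂ, A = 0 → B = 0 → C = 0 → H = G + J + D + A + B + C → H = G + J + D := by
      intros; simp_all
    refine e1 _ _ (Complex.I * N' * ∫ q in Dset m, Wop (eZ m j) (fun q => b q * Φ q * χ q) q)
      _ _ _ _ (neg_eq_zero.2 gX) (neg_eq_zero.2 gY) (by rw [gZ, mul_zero]) ?_
    have vZ : ContDiff ℝ (⊤ : ℕ∞) (Wop (eZ m j) (fun q => b q * Φ q * χ q)) :=
      Wop_contDiff (eZ m j) (by fun_prop)
    rw [← integral_neg, ← integral_neg, ← integral_const_mul, ← integral_const_mul,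
      ← integral_add (intD (by fun_prop)) (intD (by fun_prop)),
      ← integral_add (intD (by fun_prop)) (intD (by fun_prop)),
      ← integral_add (intD (by fun_prop)) (intD (by fun_prop)),
      ← integral_add (intD (by fun_prop)) (intD (by fun_prop)),
      ← integral_add (intD (by fun_prop)) (intD (by fun_prop))]
    refine integral_congr_ae ?_
    filter_upwards [hZ] with q hq
    have h1 := oΦ q
    have h2 := oχ q
    rw [Wop_mul (eZ m j) (by fun_prop) dχ, Wop_mul (eZ m j) db dΦ]
    simp only [DeltaJ, Xop_eq, Yop_eq, Zop_eq] at h1 hq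
    rw [hq] at h1
    rw [hq]
    linear_combination b q * χ q * h1 * (-1) + b q * Φ q * h2 * (-1)
      + (N - N') * b q * φ q * χ q * Complex.I_sq
  rw [total]
  have bX := cs_bound (c := fun q => 2 * Wop (eX m j) b q) tX.continuous hχ.continuous hCX0 hCX hE one_pos
    (by simpa only [Xop_eq] using nX) nχ
  have bY := cs_bound (c := fun q => 2 * Wop (eY m j) b q) tY.continuous hχ.continuous hCY0 hCY hE one_pos
    (by simpa only [Yop_eq] using nY) nχ
  have b0 := cs_bound hΦ.continuous hχ.continuous hC00 hC0 hκ one_pos nΦ nχ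
  refine (norm_add₃_le).trans ?_
  nlinarith [mul_nonneg hCX0 hκ.le, mul_nonneg hCY0 hκ.le, mul_nonneg hC00 hE.le]

/-- Pairing the oscillator equation of `Φ` with `Φ` controls its horizontal derivatives. -/
lemma energy (j : Fin m) {N : ℂ} {φ Φ : Pt m → ℂ} (hφ : Continuous φ) (hΦ : ContDiff ℝ (⊤ : ℕ∞) Φ)
    (pΦ : GPeriodic Φ) (oΦ : ∀ q, -DeltaJ j Φ q = N * (-Complex.I * Zop j Φ q))
    (hZ : ∀ᵐ q ∂volume.restrict (Dset m), Zop j Φ q = Complex.I * φ q) {κ : ℝ} (hκ : 0 < κ)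
    (nφ : ∫ q in Dset m, ‖φ q‖ ^ 2 = 1) (nΦ : ∫ q in Dset m, ‖Φ q‖ ^ 2 ≤ κ ^ 2) :
    (∫ q in Dset m, ‖Xop j Φ q‖ ^ 2) + (∫ q in Dset m, ‖Yop j Φ q‖ ^ 2) ≤ ‖N‖ * κ := by
  have dΦ := hΦ.differentiable (by simp)
  have hc := conj_smooth hΦ
  have dc := hc.differentiable (by simp)
  have h1 : ∀ g : Pt m, (∫ q in Dset m, ((‖Wop g Φ q‖ ^ 2 : ℝ) : ℂ)) =
      - ∫ q in Dset m, starRingEnd ℂ (Φ q) * Wop g (Wop g Φ) q := by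
    intro g
    have t := Wop_contDiff g hΦ
    have tt := Wop_contDiff g t
    have dt := t.differentiable (by simp)
    have := integral_Wop (F := fun q => starRingEnd ℂ (Φ q) * Wop g Φ q) (by fun_prop)
      (pΦ.conj'.mul' (Wop_periodic g dΦ pΦ)) g
    rw [eq_neg_iff_add_eq_zero, ← this, ← integral_add (intD (by fun_prop)) (intD (by fun_prop))]
    congr 1
    ext q
    rw [Wop_mul g dc dt, Wop_conj g dΦ, ← Complex.normSq_eq_norm_sq, Complex.normSq_eq_conj_mul_self]
  have tX := Wop_contDiff (eX m j) hΦ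
  have tY := Wop_contDiff (eY m j) hΦ
  have tXX := Wop_contDiff (eX m j) tX
  have tYY := Wop_contDiff (eY m j) tY
  have h2 : (((∫ q in Dset m, ‖Xop j Φ q‖ ^ 2) + (∫ q in Dset m, ‖Yop j Φ q‖ ^ 2) : ℝ) : ℂ) =
      ∫ q in Dset m, N * (starRingEnd ℂ (Φ q)) * φ q := by
    rw [Xop_eq, Yop_eq]
    push_cast
    have e := h1 (eX m j)
    have e' := h1 (eY m j)
    rw [integral_complex_ofReal] at e e'
    rw [e, e', ← neg_add, ← integral_add (intD (by fun_prop)) (intD (by fun_prop)), ← integral_neg]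
    refine integral_congr_ae ?_
    filter_upwards [hZ] with q hq
    have := oΦ q
    rw [hq] at this
    simp only [DeltaJ, Xop_eq, Yop_eq] at this
    linear_combination (starRingEnd ℂ (Φ q)) * this - N * starRingEnd ℂ (Φ q) * φ q * Complex.I_sq
  have h3 := cs_bound (c := fun _ => N) (F := fun q => starRingEnd ℂ (Φ q)) (G := φ) (C := ‖N‖)
    hc.continuous hφ
    (norm_nonneg _) (fun _ _ => le_rfl) hκ one_pos (by simpa using nΦ) (by rw [nφ]; norm_num)
  rw [← h2, Complex.norm_real, mul_one] at h3
  exact (le_abs_self _).trans h3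

end

/-! ### Smooth approximation of periodic functions -/

lemma integral_vfield {m : ℕ} {F : Pt m → ℂ} (hF : Continuous F) (q : Pt m) :
    ∫ g, F (q + vfield g q) = ∫ g, F g := by
  have h1 := (measurePreserving_add_left (volume : Measure (Fin m → ℝ)) q.2.1).skew_product
    (μc := (volume : Measure (Fin m → ℝ))) (μd := volume)
    (g := fun y z => (q.2.2 - q.1 * y) + z) (by fun_prop)
    (Eventually.of_forall fun y => (measurePreserving_add_left (volume : Measure (Fin m → ℝ)) _).map_eq)
  have h2 := (measurePreserving_add_left (volume : Measure (Fin m → ℝ)) q.1).prod h1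
  rw [← Measure.volume_eq_prod, ← Measure.volume_eq_prod] at h2
  have h3 := integral_map (μ := volume) (f := F) h2.measurable.aemeasurable hF.aestronglyMeasurable
  rw [h2.map_eq] at h3
  rw [h3]
  congr 1
  ext g
  congr 1
  ext i <;> simp [vfield]
  ring

/-- Smooth periodic functions are uniformly dense among continuous periodic ones. The approximation
averages `a` over small right translations, which commute with the left action of the lattice. -/
lemma density {m : ℕ} {a : Pt m → ℂ} (ha : Continuous a) (pa : GPeriodic a) {δ : ℝ} (hδ : 0 < δ) :
    ∃ b : Pt m → ℂ, ContDiff ℝ (⊤ : ℕ∞) b ∧ GPeriodic b ∧ ∀ q ∈ Dset m, ‖a q - b q‖ ≤ δ := by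
  have hv : Continuous (fun p : Pt m × Pt m => vfield p.1 p.2) := by unfold vfield; fun_prop
  obtain ⟨S, hS, hD⟩ := Dset_subset_compact m
  have hopen : IsOpen {p : Pt m × Pt m | ‖a (p.1 + vfield p.2 p.1) - a p.1‖ < δ} := by
    refine isOpen_lt ?_ continuous_const
    fun_prop
  obtain ⟨U, V, hU, hV, hSU, h0V, hUV⟩ := generalized_tube_lemma hS (isCompact_singleton (x := (0 : Pt m))) hopen
    (by
      rintro ⟨q, g⟩ ⟨_, hg⟩
      rw [Set.mem_singleton_iff] at hg
      have h0 : vfield (0 : Pt m) q = 0 := by ext i <;> simp [vfield]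
      change ‖a (q + vfield g q) - a q‖ < δ
      rw [show g = 0 from hg, h0, add_zero, sub_self, norm_zero]
      exact hδ)
  obtain ⟨r, hr, hrV⟩ := Metric.isOpen_iff.1 hV 0 (h0V rfl)
  have hopos : (volume : Measure (Pt m)).IsOpenPosMeasure := by
    have h2 : (volume : Measure ((Fin m → ℝ) × (Fin m → ℝ))).IsOpenPosMeasure :=
      Measure.prod.instIsOpenPosMeasure
    exact Measure.prod.instIsOpenPosMeasure
  let η : ContDiffBump (0 : Pt m) := ⟨r / 2, r, by positivity, by linarith⟩
  set e : Pt m → ℝ := η.normed volume with he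
  have ec : ContDiff ℝ (⊤ : ℕ∞) e := η.contDiff_normed
  have ecc := ec.continuous
  have esupp : HasCompactSupport e := η.hasCompactSupport_normed
  have eint : ∫ g, e g = 1 := η.integral_normed
  have e0 : ∀ g, 0 ≤ e g := η.nonneg_normed
  have ez : ∀ g, g ∉ Metric.ball (0 : Pt m) r → e g = 0 := by
    intro g hg
    have := η.support_normed_eq (μ := (volume : Measure (Pt m)))
    by_contra h
    exact hg (this ▸ h : g ∈ Metric.ball (0 : Pt m) η.rOut)
  refine ⟨fun q => ∫ g, e g • a (q + vfield g q), ?_, ?_, ?_⟩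
  · -- Since `q + vfield g q` depends on `q.1` beyond the sum, the average is the convolution of `a`
    -- with a kernel depending smoothly on the parameter `q.1`.
    let G : (Fin m → ℝ) → Pt m → ℝ := fun p w => e (-w.1, -w.2.1, -w.2.2 - p * w.2.1)
    have hG : ContDiff ℝ (⊤ : ℕ∞) (fun p : (Fin m → ℝ) × Pt m => G p.1 p.2) := by
      simp only [G]
      fun_prop
    have hb : ∀ q, ∫ g, e g • a (q + vfield g q) =
        convolution a (G q.1) (ContinuousLinearMap.lsmul ℝ ℝ).flip volume q := by
      intro q
      simp only [convolution, ContinuousLinearMap.flip_apply, ContinuousLinearMap.lsmul_apply]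
      rw [← integral_vfield (F := fun t => G q.1 (q - t) • a t) _ q]
      · congr 1
        ext g
        congr 1
        change e g = e _
        congr 1
        ext i <;> simp [vfield]
      · have := hG.continuous
        simp only [G]
        fun_prop
    simp only [hb]
    rw [contDiff_iff_contDiffAt]
    intro q₀
    have hs : IsOpen (Metric.ball q₀.1 1) := Metric.isOpen_ball
    have := contDiffOn_convolution_right_with_param (𝕜 := ℝ) (n := ⊤) (f := a) (μ := (volume : Measure (Pt m)))
      (ContinuousLinearMap.lsmul ℝ ℝ).flip (g := G) (s := Metric.ball q₀.1 1)
      (k := Metric.closedBall 0 (r + (‖q₀.1‖ + 1) * r)) hs (isCompact_closedBall _ _) ?_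
      ha.locallyIntegrable hG.contDiffOn
    · have h2 := (this.contDiffAt (x := (q₀.1, q₀)) ((hs.prod isOpen_univ).mem_nhds ⟨by simp, trivial⟩))
      exact h2.comp q₀ (f := fun q : Pt m => (q.1, q)) (by fun_prop)
    · intro p w hp hw
      refine ez _ fun hball => hw ?_
      rw [mem_ball_zero_iff] at hball
      rw [mem_closedBall_zero_iff]
      have h1 : ‖w.1‖ ≤ r := by
        have := (norm_fst_le _).trans hball.le
        simpa using this
      have h2 := (norm_snd_le _).trans hball.le
      have h3 : ‖w.2.1‖ ≤ r := by
        have := (norm_fst_le _).trans h2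
        simpa using this
      have h4 : ‖-w.2.2 - p * w.2.1‖ ≤ r := (norm_snd_le _).trans h2
      have h5 : ‖p‖ ≤ ‖q₀.1‖ + 1 := by
        have h6 := norm_add_le (p - q₀.1) q₀.1
        rw [sub_add_cancel] at h6
        rw [mem_ball_iff_norm] at hp
        linarith
      have h7 : ‖p * w.2.1‖ ≤ (‖q₀.1‖ + 1) * r :=
        (norm_mul_le _ _).trans (by gcongr)
      have h8 : ‖w.2.2‖ ≤ r + (‖q₀.1‖ + 1) * r := by
        have h9 := norm_add_le (-w.2.2 - p * w.2.1) (p * w.2.1)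
        rw [sub_add_cancel, norm_neg] at h9
        linarith
      have h10 : 0 ≤ (‖q₀.1‖ + 1) * r := by positivity
      exact max_le (by linarith) (max_le (by linarith) h8)
  · intro A B C h q
    have : ∀ g, heisAct A B C q + vfield g (heisAct A B C q) = heisAct A B C (q + vfield g q) := by
      intro g
      simpa using (heisAct_vfield A B C g q 1).symm
    simp only [this, pa A B C h]
  · intro q hq
    have h1 : ∫ g, e g • a q = a q := by rw [integral_smul_const, eint, one_smul]
    have hi1 : Integrable (fun g => e g • a q) :=
      Continuous.integrable_of_hasCompactSupport (by fun_prop) esupp.smul_right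
    have hi2 : Integrable (fun g => e g • a (q + vfield g q)) :=
      Continuous.integrable_of_hasCompactSupport (by fun_prop) esupp.smul_right
    rw [← h1, ← integral_sub hi1 hi2]
    calc _ ≤ ∫ g, e g * δ := by
          refine norm_integral_le_of_norm_le
            (Continuous.integrable_of_hasCompactSupport (by fun_prop) esupp.mul_right) ?_
          refine Eventually.of_forall fun g => ?_
          rw [← smul_sub, norm_smul, Real.norm_of_nonneg (e0 g)]
          by_cases hg : g ∈ Metric.ball (0 : Pt m) r
          · have h3 := hUV (Set.mk_mem_prod (hSU (hD hq)) (hrV hg))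
            rw [norm_sub_rev]
            exact mul_le_mul_of_nonneg_left (le_of_lt h3) (e0 g)
          · simp [ez g hg]
      _ = δ := by rw [integral_mul_const, eint, one_mul]

/-! ### The primitive along a central direction and the conclusion -/

/-- The averages along `z_j` commute with `X_j`, `Y_j` and `Z_j`, so they preserve the oscillator
equation. -/
lemma oscillator_zAvg {m : ℕ} (j : Fin m) {K : ℝ → ℂ} (hK : Continuous K) {f : Pt m → ℂ}
    (hf : ContDiff ℝ (⊤ : ℕ∞) f) {N : ℂ}
    (h : ∀ q, -DeltaJ j f q = N * (-Complex.I * Zop j f q)) (q : Pt m) :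
    -DeltaJ j (zAvg K j f) q = N * (-Complex.I * Zop j (zAvg K j f) q) := by
  have sX := Wop_contDiff (eX m j) hf
  have sY := Wop_contDiff (eY m j) hf
  have sZ := Wop_contDiff (eZ m j) hf
  have sXX := Wop_contDiff (eX m j) sX
  have sYY := Wop_contDiff (eY m j) sY
  simp only [DeltaJ, Xop_eq, Yop_eq, Zop_eq] at h ⊢
  rw [Wop_zAvg j hK _ hf, Wop_zAvg j hK _ hf, Wop_zAvg j hK _ hf, Wop_zAvg j hK _ sX,
    Wop_zAvg j hK _ sY]
  simp only [zAvg, smul_eq_mul]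
  rw [← intervalIntegral.integral_add
      (Continuous.intervalIntegrable (by fun_prop) _ _)
      (Continuous.intervalIntegrable (by fun_prop) _ _),
    ← intervalIntegral.integral_neg, ← intervalIntegral.integral_const_mul,
    ← intervalIntegral.integral_const_mul]
  congr 1
  ext t
  linear_combination K t * h (q + t • eZ m j)

/-- The primitive `Φ = (-i ∂_{z_j})⁻¹ f` of a normalized `f` whose `z`-frequencies all have components
at least `L`: it is an exact primitive almost everywhere on the fundamental domain, and its `L²` norm
is at most `1 / L`. -/
lemma primitive_bounds {m : ℕ} (j : Fin m) {f : Pt m → ℂ} (hf : ContDiff ℝ (⊤ : ℕ∞) f)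
    (hp : GPeriodic f) (nf : ∫ q in Dset m, ‖f q‖ ^ 2 = 1) {L : ℝ} (hL : 0 < L)
    (hsupp : ∀ α : Fin m → ℤ, ¬ (∀ i, L ≤ (α i : ℝ)) → ∀ x y : Fin m → ℝ, zFourier f α x y = 0) :
    (∀ᵐ q ∂volume.restrict (Dset m), Zop j (zAvg sawK j f) q = Complex.I * f q) ∧
      ∫ q in Dset m, ‖zAvg sawK j f q‖ ^ 2 ≤ (1 / L) ^ 2 := by
  have hα : ∀ α : Fin m → ℤ, (∀ x y, zFourier f α x y = 0) ∨ L ≤ (α j : ℝ) := by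
    intro α
    by_cases h : ∀ i, L ≤ (α i : ℝ)
    · exact Or.inr (h j)
    · exact Or.inl (hsupp α h)
  have hne : ∀ l : ℤ, L ≤ (l : ℝ) → l ≠ 0 := by
    rintro l hl rfl
    simp only [Int.cast_zero] at hl
    linarith
  constructor
  · -- The mean over the `z_j`-circle vanishes because no frequency with `α j = 0` occurs.
    have hM := zAvg_L2 j (K := fun _ => 1) continuous_const hf.continuous hp 0 (fun α =>
      (hα α).imp id fun h => by simp only [one_mul, integral_exp_zero (hne _ h), norm_zero, le_refl])
    have hc := zAvg_continuous j (K := fun _ => 1) continuous_const hf.continuous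
    have h0 : ∫ q in Dset m, ‖zAvg (fun _ => 1) j f q‖ ^ 2 = 0 :=
      le_antisymm (by simpa using hM) (integral_nonneg fun q => by positivity)
    rw [integral_eq_zero_iff_of_nonneg (fun q => by positivity) (intD (by fun_prop))] at h0
    filter_upwards [h0] with q hq
    have hq' : zAvg (fun _ => (1 : ℂ)) j f q = 0 := by simpa using hq
    rw [Zop_sawK j hf hp, hq', mul_zero, sub_zero]
  · have h := zAvg_L2 j sawK_cont hf.continuous hp (1 / L) (fun α =>
      (hα α).imp id fun h => by
        have hl : (0 : ℝ) < α j := hL.trans_le h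
        rw [integral_exp_sawK (hne _ h), norm_div, norm_one, Complex.norm_intCast, abs_of_pos hl]
        exact one_div_le_one_div_of_le hL h)
    rwa [nf, mul_one] at h

/-- (Projection to the base manifold of the orthogonality claim of
Lemma 3.2(2) and the proof of Lemma 4.5 of the paper.) Sequences of eigenfunctions
living in distinct harmonic-oscillator blocks have vanishing joint microlocal
defect measure. -/
theorem distinct_oscillator_blocks_orthogonal
    (m : ℕ) (hm : 1 ≤ m) (n n' : Fin m → ℕ) (hnn' : n ≠ n')
    (φ ψ : ℕ → Pt m → ℂ) (lam mu : ℕ → ℝ)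
    (hEφ : EigenSeq m φ lam) (hEψ : EigenSeq m ψ mu)
    (hlam : Tendsto lam atTop atTop) (hmu : Tendsto mu atTop atTop)
    (ε : ℝ) (hε : 0 < ε)
    (hsuppφ : ∀ k, ∀ α : Fin m → ℤ, ¬ (∀ j, ε * lam k ≤ (α j : ℝ)) →
      ∀ x y : Fin m → ℝ, zFourier (φ k) α x y = 0)
    (hsuppψ : ∀ k, ∀ α : Fin m → ℤ, ¬ (∀ j, ε * mu k ≤ (α j : ℝ)) →
      ∀ x y : Fin m → ℝ, zFourier (ψ k) α x y = 0)
    (hoscφ : ∀ k, ∀ j : Fin m, ∀ q,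
      -DeltaJ j (φ k) q = ((2 * (n j : ℂ) + 1)) * (-Complex.I * Zop j (φ k) q))
    (hoscψ : ∀ k, ∀ j : Fin m, ∀ q,
      -DeltaJ j (ψ k) q = ((2 * (n' j : ℂ) + 1)) * (-Complex.I * Zop j (ψ k) q)) :
    ∀ a : Pt m → ℂ, Continuous a → GPeriodic a →
      Tendsto (fun k => ∫ q in Dset m, a q * φ k q * (starRingEnd ℂ) (ψ k q))
        atTop (nhds 0) := by
  intro a ha pa
  obtain ⟨j, hj⟩ := Function.ne_iff.1 hnn'
  set N : ℂ := 2 * (n j : ℂ) + 1 with hN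
  set N' : ℂ := 2 * (n' j : ℂ) + 1 with hN'
  have hNN : 0 < ‖N - N'‖ := by
    rw [norm_pos_iff, hN, hN']
    intro h
    have : (n j : ℂ) = n' j := by linear_combination h / 2
    exact hj (by exact_mod_cast this)
  have hN0 : 0 < ‖N‖ := by
    rw [norm_pos_iff, hN]
    exact_mod_cast Nat.succ_ne_zero (2 * n j)
  have hconj : starRingEnd ℂ N' = N' := by
    have h : N' = ((2 * n' j + 1 : ℕ) : ℂ) := by rw [hN']; push_cast; ring
    rw [h, Complex.conj_natCast]
  rw [Metric.tendsto_atTop']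
  intro δ hδ
  obtain ⟨b, hb, pb, hab⟩ := density ha pa (half_pos hδ)
  obtain ⟨C, hC0, hC⟩ := core_bound j hb pb N N'
  have hL : Tendsto (fun k => ε * lam k) atTop atTop := hlam.const_mul_atTop hε
  have hlim : Tendsto (fun k => C * (1 / (ε * lam k) + √(‖N‖ * (1 / (ε * lam k)))) / ‖N - N'‖)
      atTop (𝓝 0) := by
    have h1 : Tendsto (fun k => 1 / (ε * lam k)) atTop (𝓝 0) := by
      simp only [one_div]
      exact hL.inv_tendsto_atTop
    have h2 : Tendsto (fun k => √(‖N‖ * (1 / (ε * lam k)))) atTop (𝓝 0) := by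
      have h := (h1.const_mul ‖N‖).sqrt
      rwa [mul_zero, Real.sqrt_zero] at h
    have h := ((h1.add h2).const_mul C).div_const ‖N - N'‖
    rwa [add_zero, mul_zero, zero_div] at h
  have hev := (hlim.eventually_lt_const (half_pos hδ)).and (hL.eventually_gt_atTop 0)
  obtain ⟨k₀, hk₀⟩ := eventually_atTop.1 hev
  refine ⟨k₀, fun k hk => ?_⟩
  obtain ⟨hsmall, hpos⟩ := hk₀ k hk.le
  have sφ := hEφ.smooth k
  have sψ := hEψ.smooth k
  have cφ := sφ.continuous
  have cψ := sψ.continuous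
  have cb := hb.continuous
  have nψ := hEψ.normalized k
  have nφ := hEφ.normalized k
  obtain ⟨hZ, hΦ⟩ := primitive_bounds j sφ (hEφ.periodic k) nφ hpos (hsuppφ k)
  have hκ : 0 < 1 / (ε * lam k) := by positivity
  have sΦ := zAvg_smooth j sawK_cont sφ
  have pΦ := zAvg_periodic j (K := sawK) (hEφ.periodic k)
  have oΦ := oscillator_zAvg j sawK_cont sφ (hoscφ k j)
  have hE := energy j cφ sΦ pΦ oΦ hZ hκ nφ hΦ
  have hsq : √(‖N‖ * (1 / (ε * lam k))) ^ 2 = ‖N‖ * (1 / (ε * lam k)) :=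
    Real.sq_sqrt (by positivity)
  have hX0 : 0 ≤ ∫ q in Dset m, ‖Xop j (zAvg sawK j (φ k)) q‖ ^ 2 :=
    integral_nonneg fun q => by positivity
  have hY0 : 0 ≤ ∫ q in Dset m, ‖Yop j (zAvg sawK j (φ k)) q‖ ^ 2 :=
    integral_nonneg fun q => by positivity
  have hmain := hC (φ k) (ψ k) (zAvg sawK j (φ k)) cφ sψ sΦ (hEψ.periodic k) pΦ (hoscψ k j) hconj
    oΦ hZ _ _ hκ (Real.sqrt_pos.2 (mul_pos hN0 hκ)) nψ hΦ (by rw [hsq]; linarith)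
    (by rw [hsq]; linarith)
  rw [norm_mul, mul_comm, ← le_div_iff₀ hNN] at hmain
  have hdiff := cs_bound (c := fun q => a q - b q) (F := φ k)
    (G := fun q => starRingEnd ℂ (ψ k q)) cφ (by fun_prop) (half_pos hδ).le hab one_pos one_pos
    (by rw [nφ]; norm_num) (by simp only [RCLike.norm_conj, nψ]; norm_num)
  have hsplit : ∫ q in Dset m, a q * φ k q * starRingEnd ℂ (ψ k q) =
      (∫ q in Dset m, (a q - b q) * φ k q * starRingEnd ℂ (ψ k q)) +
        ∫ q in Dset m, b q * φ k q * starRingEnd ℂ (ψ k q) := by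
    rw [← integral_add (intD (by fun_prop)) (intD (by fun_prop))]
    congr 1
    ext q
    ring
  rw [dist_zero_right, hsplit]
  refine (norm_add_le _ _).trans_lt ?_
  linarith
end
end

section
/- Let λ ∈ ℝ. There exists a nonzero smooth Γ-periodic function φ: ℝ³ → ℂ with −Δ_𝐇 φ = λφ if and only if λ belongs to {(2ℓ+1)|α| : ℓ ∈ ℕ, α ∈ ℤ∖{0}} ∪ {2π(k_1² + k_2²) : (k_1,k_2) ∈ ℤ²}. (The spectrum of the sub-Laplacian on the compact quotient of the 3D Heisenberg group, as recalled and used in Section 1.7 of the paper.) -/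
/-!
With `X = ∂_x`, `Y = ∂_y - x∂_z`, `Z = ∂_z` one has `[X, Y] = -Z`, and `Z` commutes with both. For
`c² = -1` this gives the factorization `(X - cY)(X + cY) = Δ - cZ` (`lad_lad`), so on the space
`Zφ = iαφ` the operators `X ± iY` are ladder operators that shift the eigenvalue of `-Δ` by `2α`
up or down (`Delta_lad`). They commute with left translations, hence preserve `Γ`-periodicity.

*Eigenvalues are in the list.* A nonzero eigenfunction has a nonzero Fourier component in `z`, of
frequency `α ∈ ℤ` say, which is again a smooth periodic eigenfunction (`avg`, `exists_avg_ne_zero`,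
`Delta_avg`). If `α ≠ 0`, apply the lowering operator repeatedly. Eigenvalues of `-Δ` are
nonnegative (`eigen_nonneg`): at a point of maximal modulus the second derivatives of
`Re (conj (φ q₀) φ)` along `X` and `Y` are nonpositive. So the process reaches zero, and the last
nonzero function is annihilated by the lowering operator, hence has eigenvalue `|α|`
(`ladder_descent`). If `α = 0`, the function lives on a flat torus, and taking Fourier components
in `y` and `x` leaves a single exponential (`flat_case`).

*The list consists of eigenvalues.* The values `2π(k₁² + k₂²)` come from exponentials in `x, y`
(`exists_flat`). For `n = |α| > 0`, an explicit Gaussian times a Jacobi theta function is a periodic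
function annihilated by `X + iY` (`exists_ground`), and raising it `ℓ` times gives the eigenvalue
`(2ℓ + 1)n`; the result is nonzero since lowering undoes raising up to a nonzero factor
(`exists_excited`).
-/

open MeasureTheory Filter Real Topology

noncomputable section

/-! ### Directional derivatives and the commutation relations -/

section HeisenbergSpectrum

open Complex (I)

/-- The constant-coefficient directional derivative `∂_w`. -/
def dirD (w : Pt 1) (φ : Pt 1 → ℂ) : Pt 1 → ℂ := fun q => fderiv ℝ φ q w

/-- Smoothness of functions on the Heisenberg group. -/
abbrev Sm (φ : Pt 1 → ℂ) : Prop := ContDiff ℝ (⊤ : ℕ∞) φ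

lemma Sm.dirD {φ : Pt 1 → ℂ} (h : Sm φ) (w : Pt 1) : Sm (dirD w φ) :=
  (h.fderiv_right (m := (⊤ : ℕ∞)) (by simp)).clm_apply contDiff_const

lemma Sm.diff {φ : Pt 1 → ℂ} (h : Sm φ) : Differentiable ℝ φ := h.differentiable (by simp)

lemma dirD_comm {φ : Pt 1 → ℂ} (h : Sm φ) (v w : Pt 1) :
    dirD v (dirD w φ) = dirD w (dirD v φ) := by
  have key : ∀ (a b q : Pt 1), dirD a (dirD b φ) q = fderiv ℝ (fderiv ℝ φ) q a b := by
    intro a b q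
    have hd : DifferentiableAt ℝ (fderiv ℝ φ) q :=
      (h.fderiv_right (m := (⊤ : ℕ∞)) (by simp)).differentiable (by simp) q
    unfold dirD
    rw [fderiv_clm_apply hd (differentiableAt_const b)]
    simp
  funext q
  rw [key, key]
  exact (h.contDiffAt.isSymmSndFDerivAt
    (by simpa using (WithTop.coe_le_coe.2 le_top : ((2 : ℕ∞) : WithTop ℕ∞) ≤ (⊤ : ℕ∞)))) v w

lemma dirD_add {φ ψ : Pt 1 → ℂ} (h : Sm φ) (k : Sm ψ) (w : Pt 1) (q : Pt 1) :
    dirD w (fun q => φ q + ψ q) q = dirD w φ q + dirD w ψ q := by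
  unfold dirD
  rw [fderiv_fun_add (h.diff q) (k.diff q)]; rfl

lemma dirD_sub {φ ψ : Pt 1 → ℂ} (h : Sm φ) (k : Sm ψ) (w : Pt 1) (q : Pt 1) :
    dirD w (fun q => φ q - ψ q) q = dirD w φ q - dirD w ψ q := by
  unfold dirD
  rw [fderiv_fun_sub (h.diff q) (k.diff q)]; rfl

lemma dirD_mul {φ ψ : Pt 1 → ℂ} (h : Sm φ) (k : Sm ψ) (w : Pt 1) (q : Pt 1) :
    dirD w (fun q => φ q * ψ q) q = dirD w φ q * ψ q + φ q * dirD w ψ q := by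
  unfold dirD
  rw [fderiv_fun_mul (h.diff q) (k.diff q)]
  simp; ring

lemma dirD_const_mul {φ : Pt 1 → ℂ} (h : Sm φ) (c : ℂ) (w : Pt 1) (q : Pt 1) :
    dirD w (fun q => c * φ q) q = c * dirD w φ q := by
  unfold dirD
  rw [fderiv_const_mul (h.diff q)]
  simp

/-- A continuous real-linear functional, seen as a complex-valued function, has itself as its
derivative. -/
lemma dirD_linear (ℓ : Pt 1 →L[ℝ] ℂ) (w q : Pt 1) : dirD w (fun q => ℓ q) q = ℓ w := by
  unfold dirD
  rw [ContinuousLinearMap.fderiv]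

/-- The coordinate `x`, complex-valued. -/
def xL : Pt 1 →L[ℝ] ℂ :=
  Complex.ofRealCLM.comp ((ContinuousLinearMap.proj 0).comp (ContinuousLinearMap.fst ℝ _ _))

/-- The coordinate `y`, complex-valued. -/
def yL : Pt 1 →L[ℝ] ℂ :=
  Complex.ofRealCLM.comp ((ContinuousLinearMap.proj 0).comp
    ((ContinuousLinearMap.fst ℝ _ _).comp (ContinuousLinearMap.snd ℝ _ _)))

/-- The coordinate `z`, complex-valued. -/
def zL : Pt 1 →L[ℝ] ℂ :=
  Complex.ofRealCLM.comp ((ContinuousLinearMap.proj 0).comp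
    ((ContinuousLinearMap.snd ℝ _ _).comp (ContinuousLinearMap.snd ℝ _ _)))

@[simp] lemma xL_apply (q : Pt 1) : xL q = ((q.1 0 : ℝ) : ℂ) := rfl
@[simp] lemma yL_apply (q : Pt 1) : yL q = ((q.2.1 0 : ℝ) : ℂ) := rfl
@[simp] lemma zL_apply (q : Pt 1) : zL q = ((q.2.2 0 : ℝ) : ℂ) := rfl

/-- `X = ∂_x`. -/
local notation "Xf" => dirD (eX 1 0)
/-- `Z = ∂_z`. -/
local notation "Zf" => dirD (eZ 1 0)
/-- `Y = ∂_y - x ∂_z`. -/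
def Yf (φ : Pt 1 → ℂ) : Pt 1 → ℂ :=
  fun q => dirD (eY 1 0) φ q - xL q * dirD (eZ 1 0) φ q

lemma Delta_eq (φ : Pt 1 → ℂ) (q : Pt 1) : Delta φ q = Xf (Xf φ) q + Yf (Yf φ) q := by
  simp only [Delta, Finset.univ_unique, Finset.sum_singleton]; rfl

lemma Sm.xL : Sm (fun q => xL q) := _root_.xL.contDiff

lemma Sm.Yf {φ : Pt 1 → ℂ} (h : Sm φ) : Sm (Yf φ) :=
  (h.dirD _).sub (Sm.xL.mul (h.dirD _))

lemma dirD_Yf {φ : Pt 1 → ℂ} (h : Sm φ) (w q : Pt 1) :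
    dirD w (Yf φ) q = Yf (dirD w φ) q - xL w * Zf φ q := by
  unfold Yf
  rw [dirD_sub (h.dirD _) (Sm.xL.mul (h.dirD _)), dirD_mul Sm.xL (h.dirD _), dirD_linear,
    dirD_comm h w, dirD_comm h w]
  ring

lemma Yf_add {φ ψ : Pt 1 → ℂ} (h : Sm φ) (k : Sm ψ) (q : Pt 1) :
    Yf (fun q => φ q + ψ q) q = Yf φ q + Yf ψ q := by
  unfold Yf; rw [dirD_add h k, dirD_add h k]; ring

lemma Yf_const_mul {φ : Pt 1 → ℂ} (h : Sm φ) (c : ℂ) (q : Pt 1) :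
    Yf (fun q => c * φ q) q = c * Yf φ q := by
  unfold Yf; rw [dirD_const_mul h, dirD_const_mul h]; ring

/-- The commutator relation `[X, Y] = -Z`. -/
lemma Xf_Yf {φ : Pt 1 → ℂ} (h : Sm φ) (q : Pt 1) : Xf (Yf φ) q = Yf (Xf φ) q - Zf φ q := by
  rw [dirD_Yf h]; simp [eX]

lemma Zf_Yf {φ : Pt 1 → ℂ} (h : Sm φ) (q : Pt 1) : Zf (Yf φ) q = Yf (Zf φ) q := by
  rw [dirD_Yf h]; simp [eZ]

/-! ### Ladder operators -/

/-- The ladder operator `X + cY`; it is used with `c = ± i`. -/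
def lad (c : ℂ) (φ : Pt 1 → ℂ) : Pt 1 → ℂ := fun q => Xf φ q + c * Yf φ q

lemma Sm.lad {φ : Pt 1 → ℂ} (h : Sm φ) (c : ℂ) : Sm (lad c φ) :=
  (h.dirD _).add (contDiff_const.mul h.Yf)

lemma lad_const_mul {φ : Pt 1 → ℂ} (h : Sm φ) (c a : ℂ) (q : Pt 1) :
    lad c (fun q => a * φ q) q = a * lad c φ q := by
  unfold lad; rw [dirD_const_mul h, Yf_const_mul h]; ring

/-- The factorization `(X - cY)(X + cY) = Δ - cZ` for `c² = -1`. -/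
lemma lad_lad {φ : Pt 1 → ℂ} (h : Sm φ) {c : ℂ} (hc : c ^ 2 = -1) (q : Pt 1) :
    lad (-c) (lad c φ) q = Delta φ q - c * Zf φ q := by
  rw [Delta_eq]
  unfold lad
  rw [dirD_add (h.dirD _) (contDiff_const.mul h.Yf), dirD_const_mul h.Yf,
    Yf_add (h.dirD _) (contDiff_const.mul h.Yf), Yf_const_mul h.Yf, Xf_Yf h]
  linear_combination (-Yf (Yf φ) q) * hc

lemma Zf_lad {φ : Pt 1 → ℂ} (h : Sm φ) (c a : ℂ) (hz : ∀ q, Zf φ q = a * φ q) (q : Pt 1) :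
    Zf (lad c φ) q = a * lad c φ q := by
  have hz' : Zf φ = fun q => a * φ q := funext hz
  unfold lad
  rw [dirD_add (h.dirD _) (contDiff_const.mul h.Yf), dirD_const_mul h.Yf, Zf_Yf h,
    dirD_comm h, hz', Yf_const_mul h, dirD_const_mul h]
  ring

/-- On the `a`-eigenspace of `Z`, the operator `X + cY` shifts the eigenvalue of `Δ` by `-2ca`. -/
lemma Delta_lad {φ : Pt 1 → ℂ} (h : Sm φ) {c a μ : ℂ} (hc : c ^ 2 = -1)
    (hz : ∀ q, Zf φ q = a * φ q) (he : ∀ q, Delta φ q = μ * φ q) (q : Pt 1) :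
    Delta (lad c φ) q = (μ - 2 * c * a) * lad c φ q := by
  have h1 := lad_lad (h.lad c) (c := -c) (by simpa using hc) q
  have h2 : lad (-c) (lad c φ) = fun q => (μ - c * a) * φ q := by
    funext q; rw [lad_lad h hc, he, hz]; ring
  rw [h2, neg_neg, lad_const_mul h, Zf_lad h c a hz] at h1
  linear_combination -h1

/-! ### Invariance under left translations -/

lemma dirD_eq_of_line {φ : Pt 1 → ℂ} (h : Sm φ) {q q' w w' : Pt 1}
    (hl : ∀ t : ℝ, φ (q + t • w) = φ (q' + t • w')) : dirD w φ q = dirD w' φ q' := by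
  unfold dirD
  rw [← (h.diff q).lineDeriv_eq_fderiv, ← (h.diff q').lineDeriv_eq_fderiv]
  unfold lineDeriv
  simp only [hl]

lemma Yf_eq_dirD (φ : Pt 1 → ℂ) (q : Pt 1) :
    Yf φ q = dirD (eY 1 0 - q.1 0 • eZ 1 0) φ q := by
  simp [Yf, dirD]

lemma GPeriodic.lad {φ : Pt 1 → ℂ} (h : Sm φ) (hp : GPeriodic φ) (c : ℂ) :
    GPeriodic (lad c φ) := by
  intro a b d hg q
  have hX : Xf φ (heisAct a b d q) = Xf φ q := by
    refine dirD_eq_of_line h fun t => ?_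
    rw [← hp a b d hg (q + t • eX 1 0)]
    congr 1
    simp only [heisAct, eX]
    ext j
    all_goals simp
    all_goals ring
  have hY : Yf φ (heisAct a b d q) = Yf φ q := by
    rw [Yf_eq_dirD, Yf_eq_dirD]
    refine dirD_eq_of_line h fun t => ?_
    rw [← hp a b d hg (q + t • _)]
    congr 1
    simp only [heisAct, eY, eZ]
    ext j <;> fin_cases j <;> simp <;> ring
  unfold _root_.lad
  rw [hX, hY]

/-! ### The maximum principle -/

lemma second_deriv_nonpos_of_max {g g' : ℝ → ℝ} {g'' : ℝ} (h1 : ∀ t, HasDerivAt g (g' t) t)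
    (h2 : HasDerivAt g' g'' 0) (hmax : ∀ t, g t ≤ g 0) : g'' ≤ 0 := by
  by_contra! hpos
  have hd : deriv g = g' := funext fun t => (h1 t).deriv
  have hlm : IsLocalMax g 0 := Eventually.of_forall hmax
  have hmin : IsLocalMin g 0 :=
    isLocalMin_of_deriv_deriv_pos (by rw [hd, h2.deriv]; exact hpos) hlm.deriv_eq_zero
      (h1 0).continuousAt
  have hconst : g =ᶠ[𝓝 0] fun _ => g 0 := by
    filter_upwards [hmin] with t ht using le_antisymm (hmax t) ht
  have := hconst.deriv.deriv_eq
  rw [hd, h2.deriv] at this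
  simp at this
  exact hpos.ne' this

lemma hasDerivAt_line {φ : Pt 1 → ℂ} (h : Sm φ) (q w : Pt 1) (t : ℝ) :
    HasDerivAt (fun t : ℝ => φ (q + t • w)) (dirD w φ (q + t • w)) t := by
  have h1 : HasDerivAt (fun t : ℝ => q + t • w) w t := by
    simpa using ((hasDerivAt_id t).smul_const w).const_add q
  exact (h.diff (q + t • w)).hasFDerivAt.comp_hasDerivAt t h1

/-- A modulus maximum of `φ` on a line is a maximum of `Re (conj (φ q) φ)`, so the second
directional derivative of the latter is nonpositive. -/
lemma line_max {φ χ : Pt 1 → ℂ} (h : Sm φ) (k : Sm χ) (q w : Pt 1)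
    (hχ : ∀ t : ℝ, dirD w φ (q + t • w) = χ (q + t • w)) (hmax : ∀ q', ‖φ q'‖ ≤ ‖φ q‖) :
    ((starRingEnd ℂ) (φ q) * dirD w χ q).re ≤ 0 := by
  have hre : ∀ {f : ℝ → ℂ} {f' : ℂ} {t : ℝ}, HasDerivAt f f' t →
      HasDerivAt (fun t => ((starRingEnd ℂ) (φ q) * f t).re) ((starRingEnd ℂ) (φ q) * f').re t := by
    intro f f' t hf
    exact Complex.reCLM.hasFDerivAt.comp_hasDerivAt t (hf.const_mul _)
  refine second_deriv_nonpos_of_max (g := fun t => ((starRingEnd ℂ) (φ q) * φ (q + t • w)).re)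
    (g' := fun t => ((starRingEnd ℂ) (φ q) * χ (q + t • w)).re) ?_ ?_ ?_
  · intro t
    have := hasDerivAt_line h q w t
    rw [hχ] at this
    exact hre this
  · have := hasDerivAt_line k q w 0
    rw [zero_smul, add_zero] at this
    exact hre this
  · intro t
    calc ((starRingEnd ℂ) (φ q) * φ (q + t • w)).re ≤ ‖(starRingEnd ℂ) (φ q) * φ (q + t • w)‖ :=
          Complex.re_le_norm _
      _ ≤ ‖φ q‖ * ‖φ q‖ := by
          rw [norm_mul, RCLike.norm_conj]; gcongr; exact hmax _
      _ = _ := by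
          simp only [zero_smul, add_zero]
          rw [mul_comm ((starRingEnd ℂ) (φ q)), Complex.mul_conj, Complex.ofReal_re,
            Complex.normSq_eq_norm_sq]
          ring

/-- The side length `√(2π)` of the lattice. -/
def sL : ℝ := Real.sqrt (2 * π)

lemma sL_pos : 0 < sL := Real.sqrt_pos.2 (by positivity)
lemma sL_sq : sL * sL = 2 * π := Real.mul_self_sqrt (by positivity)

lemma GPeriodic.int {φ : Pt 1 → ℂ} (hp : GPeriodic φ) (a b c : ℤ) (q : Pt 1) :
    φ (heisAct (fun _ => a * sL) (fun _ => b * sL) (fun _ => c * (2 * π)) q) = φ q :=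
  hp _ _ _ ⟨fun _ => ⟨a, rfl⟩, fun _ => ⟨b, rfl⟩, fun _ => ⟨c, rfl⟩⟩ q

/-- The box `[0, √(2π)]² × [0, 2π]` meets every `Γ`-orbit, so the modulus of a periodic function
attains its maximum. -/
lemma exists_max {φ : Pt 1 → ℂ} (h : Sm φ) (hp : GPeriodic φ) : ∃ q, ∀ q', ‖φ q'‖ ≤ ‖φ q‖ := by
  have hK : IsCompact (Set.Icc (0 : Pt 1) (fun _ => sL, fun _ => sL, fun _ => 2 * π)) :=
    isCompact_Icc
  have hne : (Set.Icc (0 : Pt 1) (fun _ => sL, fun _ => sL, fun _ => 2 * π)).Nonempty := by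
    refine ⟨0, le_refl _, fun _ => sL_pos.le, fun _ => sL_pos.le, fun _ => ?_⟩
    simp; positivity
  obtain ⟨q, -, hq⟩ := hK.exists_isMaxOn hne h.continuous.norm.continuousOn
  refine ⟨q, fun q' => ?_⟩
  -- translate first `x` and `y`, then `z`, into the fundamental box
  set a : ℤ := -⌊q'.1 0 / sL⌋
  set b : ℤ := -⌊q'.2.1 0 / sL⌋
  set c : ℤ := -⌊(q'.2.2 0 - a * sL * q'.2.1 0) / (2 * π)⌋
  rw [← hp.int a b c q']
  have fl : ∀ (u T : ℝ), 0 < T → 0 ≤ (-⌊u / T⌋ : ℤ) * T + u ∧ (-⌊u / T⌋ : ℤ) * T + u ≤ T := by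
    intro u T hT
    have h1 := Int.floor_le (u / T)
    have h2 := (Int.lt_floor_add_one (u / T)).le
    rw [le_div_iff₀ hT] at h1
    rw [div_le_iff₀ hT] at h2
    push_cast
    constructor <;> nlinarith
  have hx := fl (q'.1 0) sL sL_pos
  have hy := fl (q'.2.1 0) sL sL_pos
  have hz := fl (q'.2.2 0 - a * sL * q'.2.1 0) (2 * π) (by positivity)
  apply hq
  refine ⟨⟨fun j => ?_, fun j => ?_, fun j => ?_⟩, ⟨fun j => ?_, fun j => ?_, fun j => ?_⟩⟩ <;>
    fin_cases j <;> simp only [heisAct]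
  · exact hx.1
  · exact hy.1
  · have := hz.1; simp only [Fin.zero_eta, Fin.isValue, Prod.snd_zero, Pi.zero_apply]; linarith
  · exact hx.2
  · exact hy.2
  · have := hz.2; simp only [Fin.zero_eta, Fin.isValue]; linarith

/-- Eigenvalues of `-Δ` on nonzero smooth periodic functions are nonnegative, by evaluating the
equation at a point of maximal modulus. -/
lemma eigen_nonneg {φ : Pt 1 → ℂ} (h : Sm φ) (hp : GPeriodic φ) (h0 : φ ≠ 0) {μ : ℝ}
    (he : ∀ q, Delta φ q = -(μ : ℂ) * φ q) : 0 ≤ μ := by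
  obtain ⟨q, hq⟩ := exists_max h hp
  have hφq : 0 < ‖φ q‖ := by
    by_contra! hle
    exact h0 (funext fun q' => norm_le_zero_iff.1 ((hq q').trans hle))
  have h1 := line_max h (h.dirD (eX 1 0)) q (eX 1 0) (fun _ => rfl) hq
  have h2 := line_max h h.Yf q (eY 1 0 - q.1 0 • eZ 1 0) (fun t => by
    rw [Yf_eq_dirD]; simp [eY, eZ]) hq
  rw [← Yf_eq_dirD] at h2
  have h3 := he q
  rw [Delta_eq] at h3
  have h4 : (starRingEnd ℂ) (φ q) * Xf (Xf φ) q + (starRingEnd ℂ) (φ q) * Yf (Yf φ) q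
      = ((-μ * ‖φ q‖ ^ 2 : ℝ) : ℂ) := by
    rw [← mul_add, h3]
    have : φ q * (starRingEnd ℂ) (φ q) = ((‖φ q‖ ^ 2 : ℝ) : ℂ) := by
      rw [Complex.mul_conj, Complex.normSq_eq_norm_sq]
    push_cast at this ⊢
    linear_combination (-(μ : ℂ)) * this
  have h5 := congrArg Complex.re h4
  rw [Complex.add_re, Complex.ofReal_re] at h5
  have : 0 < ‖φ q‖ ^ 2 := by positivity
  by_contra! hμ
  nlinarith

/-- Lowering `φ` repeatedly must produce zero after finitely many steps, since eigenvalues are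
nonnegative; the last nonzero iterate is a ground state. -/
lemma ladder_descent (α : ℝ) (c : ℂ) (hc : c ^ 2 = -1) (hα : α ≠ 0)
    (hcα : c * (I * α) = -(|α| : ℝ)) (N : ℕ) :
    ∀ (μ : ℝ) (φ : Pt 1 → ℂ), μ < N * |α| → Sm φ → GPeriodic φ → φ ≠ 0 →
      (∀ q, Zf φ q = I * α * φ q) → (∀ q, Delta φ q = -(μ : ℂ) * φ q) →
      ∃ ℓ : ℕ, μ = (2 * ℓ + 1) * |α| := by
  have hpos : 0 < |α| := abs_pos.2 hα
  induction N with
  | zero =>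
    intro μ φ hμ h hp h0 _ he
    have := eigen_nonneg h hp h0 he
    simp at hμ; linarith
  | succ N ih =>
    intro μ φ hμ h hp h0 hz he
    by_cases hl : lad c φ = 0
    · refine ⟨0, ?_⟩
      obtain ⟨q, hq⟩ := Function.ne_iff.1 h0
      have h1 := lad_lad h hc q
      have h2 : lad (-c) (lad c φ) q = 0 := by
        have := lad_const_mul h (-c) 0 q
        simp only [zero_mul] at this
        rw [hl]; exact this
      rw [h2, he, hz] at h1
      have h3 : ((|α| : ℝ) - (μ : ℂ)) * φ q = 0 := by linear_combination -h1 + φ q * hcα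
      have h4 := (mul_eq_zero.1 h3).resolve_right hq
      have h5 : |α| = μ := by exact_mod_cast sub_eq_zero.1 h4
      rw [← h5]; simp
    · have hd := Delta_lad h hc hz he
      obtain ⟨ℓ, hℓ⟩ := ih (μ - 2 * |α|) (lad c φ) (by push_cast at hμ; linarith) (h.lad c)
        (GPeriodic.lad h hp c) hl (Zf_lad h c _ hz) (fun q => by
          rw [hd q]; push_cast; linear_combination (-2 * lad c φ q) * hcα)
      refine ⟨ℓ + 1, ?_⟩
      push_cast
      linarith

/-! ### Fourier components along a direction -/

/-- The kernel `s ↦ e^{-2πiks/T}`. -/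
def fker (T : ℝ) (k : ℤ) (s : ℝ) : ℂ := Complex.exp (-(2 * π * I * k * s / T))

lemma continuous_fker (T : ℝ) (k : ℤ) : Continuous (fker T k) := by
  unfold fker; fun_prop

/-- The (unnormalized) `k`-th Fourier component of `φ` along the direction `v` with period `T`. -/
def avg (v : Pt 1) (T : ℝ) (k : ℤ) (φ : Pt 1 → ℂ) : Pt 1 → ℂ :=
  fun q => ∫ s in (0 : ℝ)..T, fker T k s * φ (q + s • v)

lemma avg_hasFDerivAt (v : Pt 1) (T : ℝ) (k : ℤ) {φ : Pt 1 → ℂ} (h : Sm φ) (q : Pt 1) :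
    HasFDerivAt (avg v T k φ) (∫ s in (0 : ℝ)..T, fker T k s • fderiv ℝ φ (q + s • v)) q := by
  have hker := continuous_fker T k
  have hφ := h.continuous
  have hφ' : Continuous (fderiv ℝ φ) := h.continuous_fderiv (by simp)
  have hF' : Continuous (fun p : Pt 1 × ℝ => fker T k p.2 • fderiv ℝ φ (p.1 + p.2 • v)) := by
    fun_prop
  obtain ⟨C, hC⟩ := ((isCompact_closedBall q 1).prod (isCompact_uIcc (a := (0 : ℝ)) (b := T))
    ).exists_bound_of_continuousOn hF'.continuousOn
  refine intervalIntegral.hasFDerivAt_integral_of_dominated_of_fderiv_le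
    (F := fun q s => fker T k s * φ (q + s • v))
    (F' := fun q s => fker T k s • fderiv ℝ φ (q + s • v)) (bound := fun _ => C)
    (Metric.closedBall_mem_nhds q one_pos) ?_ ?_ ?_ ?_ ?_ ?_
  · refine Eventually.of_forall fun x => Continuous.aestronglyMeasurable ?_
    fun_prop
  · refine Continuous.intervalIntegrable ?_ _ _
    fun_prop
  · refine Continuous.aestronglyMeasurable ?_
    fun_prop
  · refine Eventually.of_forall fun t ht x hx => ?_
    exact hC (x, t) ⟨hx, Set.uIoc_subset_uIcc ht⟩
  · exact intervalIntegrable_const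
  · refine Eventually.of_forall fun t ht x hx => ?_
    have h1 : HasFDerivAt (fun x => φ (x + t • v)) (fderiv ℝ φ (x + t • v)) x :=
      
      (h.diff (x + t • v)).hasFDerivAt.comp x ((hasFDerivAt_id x).add_const (t • v))
    exact h1.const_mul _

lemma dirD_avg (v : Pt 1) (T : ℝ) (k : ℤ) {φ : Pt 1 → ℂ} (h : Sm φ) (w : Pt 1) :
    dirD w (avg v T k φ) = avg v T k (dirD w φ) := by
  funext q
  unfold dirD
  have hker := continuous_fker T k
  have hφ' : Continuous (fderiv ℝ φ) := h.continuous_fderiv (by simp)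
  rw [(avg_hasFDerivAt v T k h q).fderiv, ContinuousLinearMap.intervalIntegral_apply]
  · rfl
  · refine Continuous.intervalIntegrable ?_ _ _
    fun_prop

lemma Sm.avg (v : Pt 1) (T : ℝ) (k : ℤ) {φ : Pt 1 → ℂ} (h : Sm φ) : Sm (avg v T k φ) := by
  refine contDiff_infty.2 fun n => ?_
  induction n generalizing φ with
  | zero =>
    exact contDiff_zero.2 (continuous_iff_continuousAt.2 fun q =>
      (avg_hasFDerivAt v T k h q).continuousAt)
  | succ n ih =>
    have hd : Differentiable ℝ (_root_.avg v T k φ) :=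
      fun q => (avg_hasFDerivAt v T k h q).differentiableAt
    push_cast
    refine contDiff_succ_iff_fderiv.2 ⟨hd, by simp, contDiff_clm_apply_iff.2 fun w => ?_⟩
    have := ih (h.dirD w)
    rw [← dirD_avg v T k h w] at this
    exact this

lemma avg_const_mul (v : Pt 1) (T : ℝ) (k : ℤ) (φ : Pt 1 → ℂ) (a : ℂ) (q : Pt 1) :
    avg v T k (fun q => a * φ q) q = a * avg v T k φ q := by
  unfold avg
  rw [← intervalIntegral.integral_const_mul]
  congr 1; funext s; ring

lemma avg_add (v : Pt 1) (T : ℝ) (k : ℤ) {φ ψ : Pt 1 → ℂ} (h : Sm φ) (h' : Sm ψ) (q : Pt 1) :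
    avg v T k (fun q => φ q + ψ q) q = avg v T k φ q + avg v T k ψ q := by
  have hker := continuous_fker T k
  have hφ := h.continuous
  have hψ := h'.continuous
  unfold avg
  rw [← intervalIntegral.integral_add (Continuous.intervalIntegrable (by fun_prop) _ _)
    (Continuous.intervalIntegrable (by fun_prop) _ _)]
  congr 1; funext s; ring

lemma Yf_avg (v : Pt 1) (hv : v.1 0 = 0) (T : ℝ) (k : ℤ) {φ : Pt 1 → ℂ} (h : Sm φ) :
    Yf (avg v T k φ) = avg v T k (Yf φ) := by
  have hker := continuous_fker T k
  have h1 := (h.dirD (eY 1 0)).continuous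
  have h2 := (h.dirD (eZ 1 0)).continuous
  funext q
  unfold Yf
  rw [dirD_avg v T k h, dirD_avg v T k h]
  unfold avg
  rw [← intervalIntegral.integral_const_mul, ← intervalIntegral.integral_sub
    (Continuous.intervalIntegrable (by fun_prop) _ _)
    (Continuous.intervalIntegrable (by fun_prop) _ _)]
  congr 1; funext s
  simp [hv]; ring

/-- Averages along directions without `x`-component commute with `Δ`. -/
lemma Delta_avg (v : Pt 1) (hv : v.1 0 = 0) (T : ℝ) (k : ℤ) {φ : Pt 1 → ℂ} (h : Sm φ) {μ : ℂ}
    (he : ∀ q, Delta φ q = μ * φ q) (q : Pt 1) :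
    Delta (avg v T k φ) q = μ * avg v T k φ q := by
  rw [Delta_eq, dirD_avg v T k h, dirD_avg v T k (h.dirD _), Yf_avg v hv T k h,
    Yf_avg v hv T k h.Yf, ← avg_const_mul, ← avg_add v T k ((h.dirD _).dirD _) h.Yf.Yf]
  congr 1; funext q; rw [← he, Delta_eq]

/-- The `k`-th Fourier component is an eigenfunction of translations along `v`. -/
lemma avg_translate {v : Pt 1} {T : ℝ} (hT : 0 < T) (k : ℤ) {φ : Pt 1 → ℂ}
    (hper : ∀ q, φ (q + T • v) = φ q) (q : Pt 1) (t : ℝ) :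
    avg v T k φ (q + t • v) = Complex.exp (2 * π * I * k * t / T) * avg v T k φ q := by
  have hT' : (T : ℂ) ≠ 0 := by exact_mod_cast hT.ne'
  let G : ℝ → ℂ := fun s => fker T k s * φ (q + s • v)
  have hG : Function.Periodic G T := by
    intro s
    have h1 : fker T k (s + T) = fker T k s := by
      unfold fker
      refine Complex.exp_eq_exp_iff_exists_int.2 ⟨-k, ?_⟩
      push_cast; field_simp; ring
    have h2 : φ (q + (s + T) • v) = φ (q + s • v) := by
      rw [add_smul, ← add_assoc, hper]
    simp only [G, h1, h2]
  have h1 : avg v T k φ (q + t • v)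
      = ∫ s in (0 : ℝ)..T, Complex.exp (2 * π * I * k * t / T) * G (s + t) := by
    unfold avg
    congr 1; funext s
    simp only [G]
    rw [← mul_assoc]
    congr 1
    · unfold fker
      rw [← Complex.exp_add]
      congr 1; push_cast; field_simp; ring
    · congr 1; module
  rw [h1, intervalIntegral.integral_const_mul, intervalIntegral.integral_comp_add_right]
  congr 1
  have := hG.intervalIntegral_add_eq t 0
  rw [zero_add] at this
  rw [zero_add, add_comm T t, this]
  rfl

lemma dirD_avg_self {v : Pt 1} {T : ℝ} (hT : 0 < T) (k : ℤ) {φ : Pt 1 → ℂ} (h : Sm φ)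
    (hper : ∀ q, φ (q + T • v) = φ q) (q : Pt 1) :
    dirD v (avg v T k φ) q = 2 * π * I * k / T * avg v T k φ q := by
  have h1 := hasDerivAt_line (h.avg v T k) q v 0
  rw [zero_smul, add_zero] at h1
  have h2 : HasDerivAt (fun t : ℝ => Complex.exp (2 * π * I * k * t / T) * avg v T k φ q)
      (2 * π * I * k / T * avg v T k φ q) 0 := by
    have e1 : HasDerivAt (fun t : ℝ => 2 * π * I * k * (t : ℂ) / T) (2 * π * I * k / T) 0 := by
      simpa using (((hasDerivAt_id (0 : ℝ)).ofReal_comp).const_mul (2 * π * I * k)).div_const (T : ℂ)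
    simpa using (e1.cexp).mul_const (avg v T k φ q)
  have h3 : (fun t : ℝ => avg v T k φ (q + t • v))
      = fun t : ℝ => Complex.exp (2 * π * I * k * t / T) * avg v T k φ q :=
    funext fun t => avg_translate hT k hper q t
  rw [h3] at h1
  exact h1.unique h2

/-- Uniqueness of Fourier series: a nonzero periodic function has a nonzero Fourier component. -/
lemma exists_avg_ne_zero {v : Pt 1} {T : ℝ} (hT : 0 < T) {φ : Pt 1 → ℂ} (h : Sm φ)
    (hper : ∀ q, φ (q + T • v) = φ q) (h0 : φ ≠ 0) : ∃ k, avg v T k φ ≠ 0 := by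
  by_contra! hall
  refine h0 (funext fun q => ?_)
  have : Fact (0 < T) := ⟨hT⟩
  let g : ℝ → ℂ := fun s => φ (q + s • v)
  have hg : Function.Periodic g T := by
    intro s
    simp only [g]
    rw [add_smul, ← add_assoc, hper]
  have hgc : Continuous g := by
    have := h.continuous
    fun_prop
  let f : C(AddCircle T, ℂ) := ⟨hg.lift, continuous_coinduced_dom.2 hgc⟩
  have hcoef : ∀ n, fourierCoeff f n = 0 := by
    intro n
    rw [fourierCoeff_eq_intervalIntegral f n 0]
    have h1 := congrFun (hall n) q
    unfold avg at h1
    rw [zero_add]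
    have h2 : ∀ x : ℝ, @fourier T (-n) x • f x = fker T n x * φ (q + x • v) := by
      intro x
      rw [fourier_coe_apply, smul_eq_mul]
      congr 1
      unfold fker
      congr 1; push_cast; ring
    simp only [h2, h1]
    simp
  have hs : Summable (fourierCoeff f) := by
    rw [show fourierCoeff f = fun _ => 0 from funext hcoef]; exact summable_zero
  have hsum := has_pointwise_sum_fourier_series_of_summable hs (0 : AddCircle T)
  simp only [hcoef, zero_smul] at hsum
  have h1 : f (0 : AddCircle T) = 0 := (hasSum_zero.unique hsum).symm
  have h2 : f ((0 : ℝ) : AddCircle T) = g 0 := rfl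
  simpa [g, h1] using h2.symm

/-! ### Every eigenvalue is in the list -/

lemma GPeriodic.avg_z {φ : Pt 1 → ℂ} (hp : GPeriodic φ) (T : ℝ) (k : ℤ) :
    GPeriodic (avg (eZ 1 0) T k φ) := by
  intro a b c hg q
  unfold avg
  congr 1; funext s
  rw [← hp a b c hg (q + s • eZ 1 0)]
  congr 2
  simp only [heisAct, eZ]
  ext j <;> fin_cases j <;> simp
  ring

/-- The flat case: an eigenfunction that does not depend on `z` comes from the torus
`ℝ² / (√(2π) ℤ)²`. -/
lemma flat_case {ψ : Pt 1 → ℂ} (h : Sm ψ) (hp : GPeriodic ψ) (h0 : ψ ≠ 0) {lam : ℝ}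
    (hz : ∀ (q : Pt 1) (t : ℝ), ψ (q + t • eZ 1 0) = ψ q)
    (he : ∀ q, Delta ψ q = -(lam : ℂ) * ψ q) :
    ∃ k₁ k₂ : ℤ, lam = 2 * π * ((k₁ : ℝ) ^ 2 + (k₂ : ℝ) ^ 2) := by
  have hsL : (sL : ℂ) * sL = 2 * π := by exact_mod_cast sL_sq
  have hsL0 : (sL : ℂ) ≠ 0 := by exact_mod_cast sL_pos.ne'
  have hpx : ∀ q, ψ (q + sL • eX 1 0) = ψ q := by
    intro q
    rw [← hp.int 1 0 0 q, ← hz (q + sL • eX 1 0) (-sL * q.2.1 0)]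
    congr 1
    simp only [heisAct, eX, eZ]
    ext j <;> fin_cases j <;> simp <;> ring
  have hpy : ∀ q, ψ (q + sL • eY 1 0) = ψ q := by
    intro q
    rw [← hp.int 0 1 0 q]
    congr 1
    simp only [heisAct, eY]
    ext j <;> fin_cases j <;> simp
    ring
  have hZψ : Zf ψ = fun _ => 0 := by
    funext q
    have h1 := hasDerivAt_line h q (eZ 1 0) 0
    simp only [hz, zero_smul, add_zero] at h1
    exact h1.unique (hasDerivAt_const _ _)
  obtain ⟨k₂, hχ0⟩ := exists_avg_ne_zero sL_pos h hpy h0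
  have hχ := h.avg (eY 1 0) sL k₂
  have hχy := dirD_avg_self sL_pos k₂ h hpy
  have hχe := Delta_avg (eY 1 0) rfl sL k₂ h he
  have hχz : Zf (avg (eY 1 0) sL k₂ ψ) = fun _ => 0 := by
    rw [dirD_avg _ _ _ h, hZψ]; funext q; simp [avg]
  have hχx : ∀ q, avg (eY 1 0) sL k₂ ψ (q + sL • eX 1 0) = avg (eY 1 0) sL k₂ ψ q := by
    intro q
    unfold avg
    congr 1; funext s
    rw [add_right_comm, hpx]
  generalize avg (eY 1 0) sL k₂ ψ = χ at hχ0 hχ hχy hχe hχz hχx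
  obtain ⟨k₁, hω0⟩ := exists_avg_ne_zero sL_pos hχ hχx hχ0
  have hω := hχ.avg (eX 1 0) sL k₁
  have hωx := dirD_avg_self sL_pos k₁ hχ hχx
  set a : ℂ := 2 * π * I * k₁ / sL with ha
  set b : ℂ := 2 * π * I * k₂ / sL with hb
  have hY : Yf χ = fun q => b * χ q := by
    funext q; unfold Yf; rw [hχy, hχz]; ring
  have hXX : Xf (Xf χ) = fun q => (-lam - b ^ 2) * χ q := by
    funext q
    have h1 := hχe q
    rw [Delta_eq, hY, Yf_const_mul hχ, hY] at h1
    linear_combination h1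
  have h1 : Xf (Xf (avg (eX 1 0) sL k₁ χ)) = fun q => (-lam - b ^ 2) * avg (eX 1 0) sL k₁ χ q := by
    rw [dirD_avg _ _ _ hχ, dirD_avg _ _ _ (hχ.dirD _), hXX]
    funext q; rw [avg_const_mul]
  obtain ⟨q, hq⟩ := Function.ne_iff.1 hω0
  have h2 : Xf (Xf (avg (eX 1 0) sL k₁ χ)) q = a ^ 2 * avg (eX 1 0) sL k₁ χ q := by
    rw [show Xf (avg (eX 1 0) sL k₁ χ) = fun q => a * avg (eX 1 0) sL k₁ χ q from funext hωx,
      dirD_const_mul hω, hωx]; ring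
  rw [h1] at h2
  have h3 := mul_right_cancel₀ hq h2
  have sq : ∀ k : ℤ, (2 * π * I * k / sL) ^ 2 = -(2 * π * (k : ℂ) ^ 2) := by
    intro k
    rw [div_pow, pow_two (sL : ℂ), hsL]
    have : (π : ℂ) ≠ 0 := by exact_mod_cast Real.pi_ne_zero
    field_simp
    rw [Complex.I_sq]; ring
  refine ⟨k₁, k₂, ?_⟩
  rw [ha, hb, sq, sq] at h3
  have h4 : (lam : ℂ) = 2 * π * ((k₁ : ℂ) ^ 2 + (k₂ : ℂ) ^ 2) := by linear_combination -h3
  exact_mod_cast h4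

/-- Some Fourier component of the eigenfunction in the central variable `z` is nonzero; its
frequency `α` decides which of the two families the eigenvalue belongs to. -/
lemma spectrum_mp {lam : ℝ} {φ : Pt 1 → ℂ} (h0 : φ ≠ 0) (h : Sm φ) (hp : GPeriodic φ)
    (he : ∀ q, -Delta φ q = (lam : ℂ) * φ q) :
    (∃ (ℓ : ℕ) (α : ℤ), α ≠ 0 ∧ lam = (2 * ℓ + 1) * |(α : ℝ)|) ∨
     (∃ k₁ k₂ : ℤ, lam = 2 * π * ((k₁ : ℝ) ^ 2 + (k₂ : ℝ) ^ 2)) := by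
  have he' : ∀ q, Delta φ q = -(lam : ℂ) * φ q := fun q => by linear_combination -(he q)
  have hT : 0 < 2 * π := by positivity
  have hpz : ∀ q, φ (q + (2 * π) • eZ 1 0) = φ q := by
    intro q
    rw [← hp.int 0 0 1 q]
    congr 1
    simp only [heisAct, eZ]
    ext j <;> fin_cases j <;> simp
    ring
  obtain ⟨α, hψ0⟩ := exists_avg_ne_zero hT h hpz h0
  have hψ := h.avg (eZ 1 0) (2 * π) α
  have hψp := hp.avg_z (2 * π) α
  have hψe := Delta_avg (eZ 1 0) rfl (2 * π) α h he'
  by_cases hα : α = 0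
  · right
    refine flat_case hψ hψp hψ0 (fun q t => ?_) hψe
    rw [avg_translate hT α hpz, hα]; simp
  · left
    have hα' : (α : ℝ) ≠ 0 := by exact_mod_cast hα
    have hπ : (π : ℂ) ≠ 0 := by exact_mod_cast Real.pi_ne_zero
    have hψz : ∀ q, Zf (avg (eZ 1 0) (2 * π) α φ) q
        = I * (α : ℝ) * avg (eZ 1 0) (2 * π) α φ q := by
      intro q
      rw [dirD_avg_self hT α h hpz]
      congr 1
      push_cast; field_simp
    obtain ⟨N, hN⟩ := exists_nat_gt (lam / |(α : ℝ)|)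
    rw [div_lt_iff₀ (abs_pos.2 hα')] at hN
    obtain ⟨c, hc, hcα⟩ : ∃ c : ℂ, c ^ 2 = -1 ∧ c * (I * (α : ℝ)) = -(|(α : ℝ)| : ℝ) := by
      rcases le_total 0 (α : ℝ) with hs | hs
      · refine ⟨I, Complex.I_sq, ?_⟩
        rw [abs_of_nonneg hs, ← mul_assoc, Complex.I_mul_I]; ring
      · refine ⟨-I, by rw [neg_sq, Complex.I_sq], ?_⟩
        rw [abs_of_nonpos hs, ← mul_assoc, neg_mul, Complex.I_mul_I]; push_cast; ring
    obtain ⟨ℓ, hℓ⟩ := ladder_descent α c hc hα' hcα N lam _ hN hψ hψp hψ0 hψz hψe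
    exact ⟨ℓ, α, hα, hℓ⟩

/-! ### Construction of eigenfunctions -/

lemma Sm.cexp {f : Pt 1 → ℂ} (h : Sm f) : Sm (fun q => Complex.exp (f q)) := ContDiff.cexp h

lemma dirD_cexp {f : Pt 1 → ℂ} (h : Sm f) (w q : Pt 1) :
    dirD w (fun q => Complex.exp (f q)) q = dirD w f q * Complex.exp (f q) := by
  unfold dirD
  rw [((h.diff q).hasFDerivAt.cexp).fderiv]
  simp [mul_comm]

lemma exists_flat (k₁ k₂ : ℤ) :
    ∃ φ : Pt 1 → ℂ, φ ≠ 0 ∧ Sm φ ∧ GPeriodic φ ∧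
      ∀ q, -Delta φ q = ((2 * π * ((k₁ : ℝ) ^ 2 + (k₂ : ℝ) ^ 2) : ℝ) : ℂ) * φ q := by
  have hsL : (sL : ℂ) * sL = 2 * π := by exact_mod_cast sL_sq
  let ℓ : Pt 1 →L[ℝ] ℂ := (I * sL * k₁) • xL + (I * sL * k₂) • yL
  have hℓ : Sm (fun q => ℓ q) := ℓ.contDiff
  let φ : Pt 1 → ℂ := fun q => Complex.exp (ℓ q)
  have hφ : Sm φ := hℓ.cexp
  have hD : ∀ w q, dirD w φ q = ℓ w * φ q := fun w q => by
    simp only [φ]; rw [dirD_cexp hℓ, dirD_linear]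
  have hX : Xf φ = fun q => (I * sL * k₁) * φ q := by
    funext q; rw [hD]; simp [ℓ, eX]
  have hY : Yf φ = fun q => (I * sL * k₂) * φ q := by
    funext q; unfold Yf; rw [hD, hD]; simp [ℓ, eY, eZ]
  refine ⟨φ, Function.ne_iff.2 ⟨0, Complex.exp_ne_zero _⟩, hφ, ?_, fun q => ?_⟩
  · rintro a b c ⟨ha, hb, -⟩ q
    obtain ⟨m, hm⟩ := ha 0
    obtain ⟨n, hn⟩ := hb 0
    refine Complex.exp_eq_exp_iff_exists_int.2 ⟨m * k₁ + n * k₂, ?_⟩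
    simp only [ℓ, heisAct, add_apply, smul_apply, xL_apply,
      yL_apply, smul_eq_mul, hm, hn]
    change I * sL * k₁ * ((m * sL + q.1 0 : ℝ) : ℂ) + I * sL * k₂ * ((n * sL + q.2.1 0 : ℝ) : ℂ) = _
    push_cast
    linear_combination (I * (m * k₁ + n * k₂)) * hsL
  · rw [Delta_eq, hX, hY, dirD_const_mul hφ, Yf_const_mul hφ, hX, hY]
    push_cast
    linear_combination (-(sL : ℂ) ^ 2 * (k₁ ^ 2 + k₂ ^ 2) * φ q) * Complex.I_sq
      + ((k₁ : ℂ) ^ 2 + k₂ ^ 2) * φ q * hsL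

/-- Quasi-periodicity of the Jacobi theta function under the whole lattice `ℤ + ℤτ`. -/
lemma theta_quasi (z τ : ℂ) (m l : ℤ) :
    jacobiTheta₂ (z + m * τ + l) τ
      = Complex.exp (-π * I * (m ^ 2 * τ + 2 * m * z)) * jacobiTheta₂ z τ := by
  conv_rhs => rw [jacobiTheta₂, ← tsum_mul_left, ← (Equiv.addRight m).tsum_eq]
  refine tsum_congr (fun n ↦ ?_)
  simp_rw [jacobiTheta₂_term, ← Complex.exp_add, Equiv.coe_addRight]
  refine Complex.exp_eq_exp_iff_exists_int.2 ⟨n * l, ?_⟩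
  push_cast
  ring

lemma theta_zero_ne {t : ℝ} (ht : 0 < t) : jacobiTheta₂ 0 (I * t) ≠ 0 := by
  have him : 0 < (I * (t : ℂ)).im := by simpa using ht
  have hs := hasSum_jacobiTheta₂_term 0 him
  have hterm : ∀ n : ℤ, jacobiTheta₂_term n 0 (I * t) = ((Real.exp (-π * n ^ 2 * t) : ℝ) : ℂ) := by
    intro n
    rw [jacobiTheta₂_term]
    push_cast
    congr 1
    linear_combination (π * (n : ℂ) ^ 2 * t) * Complex.I_sq
  simp only [hterm] at hs
  have hs' : HasSum (fun n : ℤ => Real.exp (-π * n ^ 2 * t)) (jacobiTheta₂ 0 (I * t)).re := by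
    simpa only [Complex.ofReal_re] using Complex.hasSum_re hs
  have hpos : 0 < (jacobiTheta₂ 0 (I * t)).re := by
    rw [← hs'.tsum_eq]
    exact hs'.summable.tsum_pos (fun n => (Real.exp_pos _).le) 0 (Real.exp_pos _)
  intro h
  rw [h] at hpos
  simp at hpos

/-- The ground state `e^{inz - nx²/2} Θ(κ(x + iy), in)`, where `κ = -in/√(2π)`. It is
annihilated by `X + iY` because `Θ` is holomorphic in its first variable. -/
lemma exists_ground (n : ℕ) (hn : 0 < n) :
    ∃ φ : Pt 1 → ℂ, φ ≠ 0 ∧ Sm φ ∧ GPeriodic φ ∧ (∀ q, Zf φ q = I * n * φ q) ∧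
      ∀ q, Delta φ q = -(n : ℂ) * φ q := by
  have hsL : (sL : ℂ) * sL = 2 * π := by exact_mod_cast sL_sq
  have hπ : (π : ℂ) ≠ 0 := by exact_mod_cast Real.pi_ne_zero
  have hn' : (0 : ℝ) < n := by exact_mod_cast hn
  have him : 0 < (I * ((n : ℝ) : ℂ)).im := by simpa using hn
  have hsL0 : (sL : ℂ) ≠ 0 := by exact_mod_cast sL_pos.ne'
  obtain ⟨κ, hκ⟩ : ∃ κ : ℂ, κ * sL = -I * n := ⟨-I * n / sL, by field_simp⟩
  let W : Pt 1 →L[ℝ] ℂ := κ • (xL + I • yL)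
  have hWa : ∀ q, W q = κ * (xL q + I * yL q) := fun _ => rfl
  let θ : ℂ → ℂ := fun z => jacobiTheta₂ z (I * ((n : ℝ) : ℂ))
  have hθ : Differentiable ℂ θ := fun z => differentiableAt_jacobiTheta₂_fst z him
  let F : Pt 1 → ℂ := fun q => θ (W q)
  have hF : Sm F := ((hθ.contDiff (n := (⊤ : ℕ∞))).restrict_scalars ℝ).comp W.contDiff
  have hDF : ∀ w q, dirD w F q = deriv θ (W q) * W w := by
    intro w q
    have h1 : HasFDerivAt F _ q :=
      ((hθ (W q)).hasDerivAt.hasFDerivAt.restrictScalars ℝ).comp q W.hasFDerivAt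
    unfold dirD
    rw [h1.fderiv]
    simp [mul_comm]
  let g : Pt 1 → ℂ := fun q => (I * n) * zL q - (n / 2) * (xL q * xL q)
  have hx : Sm (fun q => xL q) := Sm.xL
  have hzz : Sm (fun q => zL q) := zL.contDiff
  have hg : Sm g := (contDiff_const.mul hzz).sub (contDiff_const.mul (hx.mul hx))
  have hDg : ∀ w q, dirD w g q = I * n * zL w - n * (xL q * xL w) := by
    intro w q
    simp only [g]
    rw [dirD_sub (contDiff_const.mul hzz) (contDiff_const.mul (hx.mul hx)), dirD_const_mul hzz,
      dirD_const_mul (hx.mul hx), dirD_mul hx hx, dirD_linear, dirD_linear]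
    ring
  let φ : Pt 1 → ℂ := fun q => Complex.exp (g q) * F q
  have hφ : Sm φ := hg.cexp.mul hF
  have hD : ∀ w q, dirD w φ q = (I * n * zL w - n * (xL q * xL w)) * φ q
      + Complex.exp (g q) * deriv θ (W q) * W w := by
    intro w q
    simp only [φ]
    rw [dirD_mul hg.cexp hF, dirD_cexp hg, hDg, hDF]
    ring
  have hZ : ∀ q, Zf φ q = I * n * φ q := by
    intro q; rw [hD]; simp [W, eZ]
  have hlad : lad I φ = fun _ => 0 := by
    funext q
    unfold lad Yf
    rw [hD, hD, hD]
    generalize deriv θ (W q) = d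
    simp [hWa, eX, eY, eZ]
    linear_combination (Complex.exp (g q) * d * κ
      - (q.1 0 : ℂ) * n * φ q) * Complex.I_sq
  refine ⟨φ, Function.ne_iff.2 ⟨0, ?_⟩, hφ, ?_, hZ, fun q => ?_⟩
  · refine mul_ne_zero (Complex.exp_ne_zero _) ?_
    simp only [F, θ, map_zero]
    exact theta_zero_ne hn'
  · rintro a b c ⟨ha, hb, hc⟩ q
    obtain ⟨k, hk⟩ := ha 0
    obtain ⟨l, hl⟩ := hb 0
    obtain ⟨m, hm⟩ := hc 0
    have ha' : a 0 = k * sL := hk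
    have hb' : b 0 = l * sL := hl
    have hW : W (heisAct a b c q) = W q + ((-k : ℤ) : ℂ) * (I * ((n : ℝ) : ℂ)) + ((n * l : ℤ) : ℂ) := by
      simp only [hWa, heisAct, xL_apply, yL_apply, ha', hb']
      push_cast
      linear_combination (k + I * l) * hκ - (n * l) * Complex.I_sq
    simp only [φ, F, θ]
    rw [hW, theta_quasi, ← mul_assoc, ← Complex.exp_add]
    congr 1
    refine Complex.exp_eq_exp_iff_exists_int.2 ⟨n * m, ?_⟩
    simp only [g, hWa, heisAct, xL_apply, yL_apply, zL_apply, ha', hm]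
    push_cast
    linear_combination (I * k * (q.1 0 + I * q.2.1 0) * sL) * hκ
      - (I * k * κ * (q.1 0 + I * q.2.1 0) + n / 2 * k ^ 2) * hsL
      - (π * k ^ 2 * n + n * sL * k * (q.1 0 + I * q.2.1 0)) * Complex.I_sq
  · have h1 := lad_lad hφ Complex.I_sq q
    have h2 : lad (-I) (lad I φ) q = 0 := by
      have := lad_const_mul hφ (-I) 0 q
      simp only [zero_mul] at this
      rw [hlad]; exact this
    rw [h2, hZ] at h1
    linear_combination -h1 + (n * φ q) * Complex.I_sq

/-- Applying the raising operator `X - iY` to the ground state `ℓ` times. -/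
lemma exists_excited (n : ℕ) (hn : 0 < n) (ℓ : ℕ) :
    ∃ φ : Pt 1 → ℂ, φ ≠ 0 ∧ Sm φ ∧ GPeriodic φ ∧ (∀ q, Zf φ q = I * n * φ q) ∧
      ∀ q, Delta φ q = -((2 * ℓ + 1) * n : ℂ) * φ q := by
  induction ℓ with
  | zero => simpa using exists_ground n hn
  | succ ℓ ih =>
    obtain ⟨φ, h0, h, hp, hz, he⟩ := ih
    have hc : (-I) ^ 2 = -1 := by rw [neg_sq, Complex.I_sq]
    refine ⟨lad (-I) φ, fun hl => ?_, h.lad _, GPeriodic.lad h hp _, Zf_lad h _ _ hz, fun q => ?_⟩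
    · -- lowering the raised function gives back a nonzero multiple of `φ`
      obtain ⟨q, hq⟩ := Function.ne_iff.1 h0
      have h1 := lad_lad h hc q
      have h2 : lad (- -I) (lad (-I) φ) q = 0 := by
        have := lad_const_mul h (- -I) 0 q
        simp only [zero_mul] at this
        rw [hl]; exact this
      rw [h2, he, hz] at h1
      have h3 : ((2 * ℓ + 2) * n : ℂ) * φ q = 0 := by
        linear_combination h1 + (n * φ q) * Complex.I_sq
      refine (mul_ne_zero ?_ hq) h3
      have : (((2 * ℓ + 2) * n : ℕ) : ℂ) ≠ 0 := by
        exact_mod_cast (by positivity : (2 * ℓ + 2) * n ≠ 0)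
      exact_mod_cast this
    · rw [Delta_lad h hc hz he]
      push_cast
      linear_combination (2 * n * lad (-I) φ q) * Complex.I_sq

end HeisenbergSpectrum

/-- The spectrum of the sub-Laplacian on the compact quotient of
the 3D Heisenberg group (Section 1.7 of the paper): λ is an eigenvalue iff
λ = (2ℓ+1)|α| for some ℓ ∈ ℕ, α ∈ ℤ∖{0}, or λ = 2π(k₁² + k₂²) for (k₁,k₂) ∈ ℤ². -/
theorem heisenberg_spectrum (lam : ℝ) :
    (∃ φ : Pt 1 → ℂ, φ ≠ 0 ∧ ContDiff ℝ (⊤ : ℕ∞) φ ∧ GPeriodic φ ∧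
      ∀ q, -Delta φ q = (lam : ℂ) * φ q) ↔
    ((∃ (ℓ : ℕ) (α : ℤ), α ≠ 0 ∧ lam = (2 * ℓ + 1) * |(α : ℝ)|) ∨
     (∃ k₁ k₂ : ℤ, lam = 2 * π * ((k₁ : ℝ) ^ 2 + (k₂ : ℝ) ^ 2))) := by
  constructor
  · rintro ⟨φ, h0, h, hp, he⟩
    exact spectrum_mp h0 h hp he
  · rintro (⟨ℓ, α, hα, rfl⟩ | ⟨k₁, k₂, rfl⟩)
    · obtain ⟨φ, h0, h, hp, -, he⟩ := exists_excited α.natAbs (Int.natAbs_pos.2 hα) ℓ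
      refine ⟨φ, h0, h, hp, fun q => ?_⟩
      have : ((α.natAbs : ℝ)) = |(α : ℝ)| := by rw [Nat.cast_natAbs, Int.cast_abs]
      rw [he, ← this]
      push_cast
      ring
    · exact exists_flat k₁ k₂
end
end
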